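/- arXiv:math/0703592 — 6 statements merged into one kernel-verified Lean document; each statement's English description precedes it below -/
import Mathlib

section
/- If m ≺ n in the Sharkovsky ordering and a continuous map f : I → I of a compact interval I has a period-m point, then f also has a period-n point. -/
/-- `x` is a periodic point of `f` with least period `m`. -/
def PeriodPt (f : ℝ → ℝ) (m : ℕ) (x : ℝ) : Prop :=
  f^[m] x = x ∧ ∀ i : ℕ, 0 < i → i < m → f^[i] x ≠ x

/-- The Sharkovsky ordering `m ≺ n`: writing `m = 2^a * p` and `n = 2^b * q` with `p`, `q` odd,
`m ≺ n` iff `(p > 1 ∧ q > 1 ∧ (a < b ∨ (a = b ∧ p < q))) ∨ (p > 1 ∧ q = 1) ∨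
(p = 1 ∧ q = 1 ∧ b < a)`. -/
def SharkovskyLt (m n : ℕ) : Prop :=
  ∃ a p b q : ℕ, Odd p ∧ Odd q ∧ m = 2 ^ a * p ∧ n = 2 ^ b * q ∧
    ((1 < p ∧ 1 < q ∧ (a < b ∨ (a = b ∧ p < q))) ∨ (1 < p ∧ q = 1) ∨
      (p = 1 ∧ q = 1 ∧ b < a))

/-!
Bau-Sen Du's proof, which uses only the intermediate value theorem. Let `α` be the least point of an
orbit of period `m ≥ 3`. Some `v > α` satisfies `f² v = α < v < f v`, and then there is a last point
`y < v` of period `2`, with `f² x < x` on `(y, v]`.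

Suppose that `m` is odd. If `p ∈ (y, v]` is fixed by `f^k` with `k` odd, then `f^(k+2) p = f² p < p`
while `f^(k+2) y = f y > y`, so `f^(k+2)` fixes a point strictly between `y` and `p`. Hence the
least point of `(y, v]` fixed by `f^q` has least period exactly `q`: from a smaller least period the
descent would reach a still smaller such point. This gives the odd periods `q > m`. For the even
ones, let `e` be the first fixed point of `f²` after `v`. The orbit of `α` under `f²` reaches
`f v > e`, so `f²` takes the value `e` at some `d` between `α` and `v`; as `f² v = α ≤ d` and
`f² e = e`, it acts on `[d, e]` as a horseshoe and has all least periods there, by the same descent.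
Since `f > e` on `(d, e)`, the least periods under `f` are twice as large.

Applied to the iterates `f^(2^a)`, these facts give the whole ordering.
-/

open Function Set

/-- The self-map `f` has a point of least period `m`. The value `m = 0` is allowed and means, as for
`Function.minimalPeriod`, that some point is not periodic. -/
def HasPeriod {α : Type*} (f : α → α) (m : ℕ) : Prop :=
  ∃ x, minimalPeriod f x = m

section Iterates

variable {α : Type*} {f : α → α} {x : α}

theorem minimalPeriod_eq_iff_of_pos {m : ℕ} (hm : 0 < m) :
    minimalPeriod f x = m ↔ f^[m] x = x ∧ ∀ i, 0 < i → i < m → f^[i] x ≠ x := by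
  constructor
  · rintro rfl
    exact ⟨iterate_minimalPeriod, fun i hi him ↦
      not_isPeriodicPt_of_pos_of_lt_minimalPeriod hi.ne' him⟩
  · rintro ⟨hper, hmin⟩
    have hper : IsPeriodicPt f m x := hper
    refine (hper.minimalPeriod_le hm).antisymm (not_lt.1 fun hlt ↦ ?_)
    exact hmin _ (hper.minimalPeriod_pos hm) hlt iterate_minimalPeriod

theorem map_iterate_sub_one_of_isPeriodicPt {m : ℕ} (hm : 0 < m) (h : IsPeriodicPt f m x) :
    f (f^[m - 1] x) = x := by
  rw [← iterate_succ_apply' f, Nat.succ_eq_add_one, Nat.sub_add_cancel hm, h.eq]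

theorem minimalPeriod_restrict {s : Set α} (h : MapsTo f s s) (x : s) :
    minimalPeriod (h.restrict f s s) x = minimalPeriod f x :=
  minimalPeriod_eq_minimalPeriod_iff.2 fun n ↦ by
    simp only [IsPeriodicPt, IsFixedPt, Subtype.ext_iff, h.coe_iterate_restrict]

theorem HasPeriod.iterate {d k : ℕ} (hd : d ≠ 0) (h : HasPeriod f (d * k)) :
    HasPeriod f^[d] k := by
  obtain ⟨x, hx⟩ := h
  refine ⟨x, ?_⟩
  rw [minimalPeriod_iterate_eq_div_gcd hd, hx, Nat.gcd_mul_right_left,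
    Nat.mul_div_cancel_left _ hd.bot_lt]

theorem HasPeriod.of_iterate_prime_pow {p a k : ℕ} (hp : p.Prime) (h : HasPeriod f^[p ^ a] k) :
    ∃ c ≤ a, (p ∣ k → c = a) ∧ HasPeriod f (p ^ c * k) := by
  obtain ⟨x, hx⟩ := h
  rw [minimalPeriod_iterate_eq_div_gcd (pow_ne_zero a hp.ne_zero)] at hx
  obtain ⟨c, hca, hgcd⟩ := (Nat.dvd_prime_pow hp).1 (Nat.gcd_dvd_right (minimalPeriod f x) (p ^ a))
  have hperiod : minimalPeriod f x = p ^ c * k := by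
    rw [← hx, hgcd, Nat.mul_div_cancel' (hgcd ▸ Nat.gcd_dvd_left _ _)]
  refine ⟨c, hca, fun hpk ↦ hca.eq_of_not_lt fun hlt ↦ ?_, x, hperiod⟩
  have hdvd : p ^ (c + 1) ∣ p ^ c := hgcd ▸ Nat.dvd_gcd
    (by rw [hperiod, pow_succ]; exact mul_dvd_mul_left _ hpk) (pow_dvd_pow p hlt)
  exact absurd ((Nat.pow_dvd_pow_iff_le_right hp.one_lt).1 hdvd) (by omega)

theorem HasPeriod.of_iterate_two_pow {a k : ℕ} (h : HasPeriod f^[2 ^ a] (2 * k)) :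
    HasPeriod f (2 ^ a * (2 * k)) := by
  obtain ⟨c, -, hc, h⟩ := h.of_iterate_prime_pow Nat.prime_two
  rwa [hc (dvd_mul_right 2 k)] at h

theorem HasPeriod.exists_forall_le_iterate [LinearOrder α] {m : ℕ} (hm : 0 < m)
    (h : HasPeriod f m) : ∃ x, minimalPeriod f x = m ∧ ∀ i, x ≤ f^[i] x := by
  obtain ⟨x, rfl⟩ := h
  obtain ⟨k, -, hk⟩ := (Finset.range (minimalPeriod f x)).exists_min_image (f^[·] x)
    ⟨0, Finset.mem_range.2 hm⟩
  refine ⟨f^[k] x, minimalPeriod_apply_iterate (minimalPeriod_pos_iff_mem_periodicPts.1 hm) k,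
    fun i ↦ ?_⟩
  rw [← iterate_add_apply, ← iterate_mod_minimalPeriod_eq (n := i + k)]
  exact hk _ (Finset.mem_range.2 (Nat.mod_lt _ hm))

end Iterates

section LinearOrder

variable {α : Type*} [LinearOrder α] {g : α → α}

theorem exists_lt_map_of_lt_iterate {a v e : α} (hae : a ≤ e) (hmin : ∀ i, a ≤ g^[i] a)
    (hle : ∀ x ∈ Ioc v e, g x ≤ e) {n : ℕ} (hen : e < g^[n] a) : ∃ x ∈ Icc a v, e < g x := by
  by_contra! hbelow
  have horbit (i : ℕ) : g^[i] a ≤ e := by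
    induction i with
    | zero => exact hae
    | succ i ih =>
      rw [iterate_succ_apply']
      rcases le_or_gt (g^[i] a) v with hv | hv
      · exact hbelow _ ⟨hmin i, hv⟩
      · exact hle _ ⟨hv, ih⟩
  exact hen.not_ge (horbit n)

theorem iterate_eq_and_mem_Ioo_of_isPeriodicPt_max {d e p : α} (hd : g d = e) (he : g e = e)
    (hlt : ∀ x ∈ Ioo d e, g x < e) (hp : p ∈ Ioo d e) {k : ℕ} (hk : 0 < k)
    (hper : IsPeriodicPt (fun x ↦ max (g x) d) k p) (i : ℕ) :
    g^[i] p = (fun x ↦ max (g x) d)^[i] p ∧ g^[i] p ∈ Ioo d e := by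
  set h : α → α := fun x ↦ max (g x) d with hh
  have hde : d < e := hp.1.trans hp.2
  have hd_not_per : h^[k] d ≠ d := by
    obtain ⟨l, rfl⟩ := Nat.exists_eq_add_one.2 hk
    have hhd : h d = e := by simp only [hh, hd, max_eq_left hde.le]
    have hhe : h e = e := by simp only [hh, he, max_eq_left hde.le]
    rw [iterate_succ_apply, hhd, iterate_fixed hhe]
    exact hde.ne'
  induction i with
  | zero => exact ⟨rfl, hp⟩
  | succ i ih =>
    have hmax : max (g (h^[i] p)) d = h^[i + 1] p := (iterate_succ_apply' h i p).symm
    have hne : h^[i + 1] p ≠ d := fun hcon ↦ hd_not_per (hcon ▸ hper.apply_iterate (i + 1))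
    have hgt : d < g (h^[i] p) := not_le.1 fun hle ↦ hne (hmax ▸ max_eq_right hle)
    rw [iterate_succ_apply', ih.1, ← hmax, max_eq_left hgt.le]
    exact ⟨rfl, hgt, hlt _ (ih.1 ▸ ih.2)⟩

end LinearOrder

section Crossings

variable {X Y : Type*} [ConditionallyCompleteLinearOrder X] [DenselyOrdered X]
  [TopologicalSpace X] [OrderTopology X] [LinearOrder Y] [TopologicalSpace Y]
  [OrderClosedTopology Y] {g k : X → Y} {s t : X}

theorem exists_first_eq (hst : s ≤ t) (hg : ContinuousOn g (Icc s t))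
    (hk : ContinuousOn k (Icc s t)) (hs : g s < k s) (ht : k t ≤ g t) :
    ∃ e ∈ Ioc s t, g e = k e ∧ ∀ x ∈ Ico s e, g x < k x := by
  have hclosed : IsClosed {x ∈ Icc s t | k x ≤ g x} := isClosed_Icc.isClosed_le hk hg
  obtain ⟨e, ⟨⟨hse, het⟩, hke⟩, hmin⟩ := (isCompact_Icc.of_isClosed_subset hclosed
    (sep_subset _ _)).exists_isLeast ⟨t, right_mem_Icc.2 hst, ht⟩
  have hsub : Icc s e ⊆ Icc s t := Icc_subset_Icc_right het
  obtain ⟨x, hx, hxe⟩ := isPreconnected_Icc.intermediate_value₂ (left_mem_Icc.2 hse)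
    (right_mem_Icc.2 hse) (hg.mono hsub) (hk.mono hsub) hs.le hke
  obtain rfl : x = e := hx.2.antisymm (hmin ⟨hsub hx, hxe.ge⟩)
  refine ⟨x, ⟨hse.lt_of_ne ?_, het⟩, hxe, fun z hz ↦ not_le.1 fun hkz ↦ ?_⟩
  · rintro rfl
    exact hs.ne hxe
  · exact hz.2.not_ge (hmin ⟨hsub (Ico_subset_Icc_self hz), hkz⟩)

theorem exists_last_eq (hst : s ≤ t) (hg : ContinuousOn g (Icc s t))
    (hk : ContinuousOn k (Icc s t)) (hs : k s ≤ g s) (ht : g t < k t) :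
    ∃ d ∈ Ico s t, g d = k d ∧ ∀ x ∈ Ioc d t, g x < k x := by
  obtain ⟨d, hd, hgk, hlt⟩ := exists_first_eq (X := Xᵒᵈ) (s := OrderDual.toDual t)
    (t := OrderDual.toDual s) hst (by rwa [Icc_toDual]) (by rwa [Icc_toDual]) ht hs
  exact ⟨d, hd.symm, hgk, fun x hx ↦ hlt x hx.symm⟩

theorem exists_isFixedPt_mem_Ioo {f : X → X} (hst : s ≤ t) (hf : ContinuousOn f (Icc s t))
    (hs : s < f s) (ht : f t < t) : ∃ x ∈ Ioo s t, IsFixedPt f x := by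
  obtain ⟨x, hx, hfx, -⟩ := exists_first_eq hst continuousOn_id hf hs ht.le
  refine ⟨x, ⟨hx.1, hx.2.lt_of_ne ?_⟩, hfx.symm⟩
  rintro rfl
  exact ht.ne hfx.symm

end Crossings

section Descent

variable {X : Type*} [LinearOrder X] {f : X → X} {y v : X} {φ : ℕ → ℕ}

theorem exists_isPeriodicPt_mem_Ioo_of_lt
    (hstep : ∀ i, ∀ p ∈ Ioc y v, IsPeriodicPt f (φ i) p →
      ∃ p' ∈ Ioo y p, IsPeriodicPt f (φ (i + 1)) p')
    {i j : ℕ} (hij : i < j) {p : X} (hp : p ∈ Ioc y v) (hper : IsPeriodicPt f (φ i) p) :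
    ∃ p' ∈ Ioo y p, IsPeriodicPt f (φ j) p' := by
  induction j, hij using Nat.le_induction with
  | base => exact hstep i p hp hper
  | succ j _ ih =>
    obtain ⟨p', hp', hper'⟩ := ih
    obtain ⟨p'', hp'', hper''⟩ := hstep j p' ⟨hp'.1, hp'.2.le.trans hp.2⟩ hper'
    exact ⟨p'', ⟨hp''.1, hp''.2.trans hp'.2⟩, hper''⟩

/-- Descent principle: the least point of `Ioc y v` fixed by `f^[φ j]` cannot have a smaller least
period `φ i`, as the descent would produce a still smaller point fixed by `f^[φ j]`. -/
theorem exists_minimalPeriod_eq_of_descent [TopologicalSpace X] [OrderTopology X]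
    [CompactIccSpace X] (hf : Continuous f) (hφ : StrictMono φ)
    (hstep : ∀ i, ∀ p ∈ Ioc y v, IsPeriodicPt f (φ i) p →
      ∃ p' ∈ Ioo y p, IsPeriodicPt f (φ (i + 1)) p')
    {i j : ℕ} (hij : i ≤ j) {p₀ : X} (hp₀ : p₀ ∈ Ioc y v) (hper₀ : IsPeriodicPt f (φ i) p₀)
    (hdvd : ∀ k, k ∣ φ j → k ∈ range φ) (hy : ¬IsPeriodicPt f (φ j) y) :
    ∃ p ∈ Ioc y v, minimalPeriod f p = φ j := by
  have hne : ∃ p ∈ Ioc y v, IsPeriodicPt f (φ j) p := by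
    rcases hij.eq_or_lt with rfl | hlt
    · exact ⟨p₀, hp₀, hper₀⟩
    · obtain ⟨p, hp, hper⟩ := exists_isPeriodicPt_mem_Ioo_of_lt hstep hlt hp₀ hper₀
      exact ⟨p, ⟨hp.1, hp.2.le.trans hp₀.2⟩, hper⟩
  obtain ⟨p₁, hp₁, hper₁⟩ := hne
  obtain ⟨p, ⟨⟨hyp, hpv⟩, hper⟩, hmin⟩ := (isCompact_Icc.inter_right
    (isClosed_eq (hf.iterate (φ j)) continuous_id)).exists_isLeast
    ⟨p₁, Ioc_subset_Icc_self hp₁, hper₁⟩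
  have hper : IsPeriodicPt f (φ j) p := hper
  have hyp : y < p := hyp.lt_of_ne (by rintro rfl; exact hy hper)
  refine ⟨p, ⟨hyp, hpv⟩, of_not_not fun hneq ↦ ?_⟩
  have hpos : 0 < φ j := Nat.pos_of_ne_zero fun h ↦ hy (h ▸ isPeriodicPt_zero f y)
  obtain ⟨i', hi'⟩ := hdvd _ hper.minimalPeriod_dvd
  have hlt : i' < j := hφ.lt_iff_lt.1 (hi' ▸ (hper.minimalPeriod_le hpos).lt_of_ne hneq)
  obtain ⟨p', hp', hper'⟩ := exists_isPeriodicPt_mem_Ioo_of_lt hstep hlt ⟨hyp, hpv⟩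
    (hi' ▸ isPeriodicPt_minimalPeriod f p)
  exact hp'.2.not_ge (hmin ⟨⟨hp'.1.le, hp'.2.le.trans hpv⟩, hper'⟩)

end Descent

section LinearContinuum

variable {X : Type*} [ConditionallyCompleteLinearOrder X] [DenselyOrdered X]
  [TopologicalSpace X] [OrderTopology X] {f : X → X} {m : ℕ}

theorem HasPeriod.one (hf : Continuous f) (hm : 0 < m) (h : HasPeriod f m) : HasPeriod f 1 := by
  obtain ⟨α, hαm, hαmin⟩ := h.exists_forall_le_iterate hm
  have hlast : f (f^[m - 1] α) = α :=
    map_iterate_sub_one_of_isPeriodicPt hm (hαm ▸ isPeriodicPt_minimalPeriod f α)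
  obtain ⟨x, -, hx⟩ := isPreconnected_univ.intermediate_value₂ (mem_univ α)
    (mem_univ (f^[m - 1] α)) continuousOn_id hf.continuousOn (hαmin 1)
    (hlast.trans_le (hαmin (m - 1)))
  exact ⟨x, minimalPeriod_eq_one_iff_isFixedPt.2 hx.symm⟩

theorem HasPeriod.exists_least_point_and_preimage (hf : Continuous f) (hm : 3 ≤ m)
    (h : HasPeriod f m) :
    ∃ α v, minimalPeriod f α = m ∧ (∀ i, α ≤ f^[i] α) ∧ α < f^[2] α ∧ α < v ∧ v < f v ∧
      f v = f^[m - 1] α ∧ f^[2] v = α := by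
  obtain ⟨α, hαm, hαmin⟩ := h.exists_forall_le_iterate (by omega)
  have hα_lt : ∀ i, 0 < i → i < m → α < f^[i] α := fun i hi him ↦ (hαmin i).lt_of_ne'
    (not_isPeriodicPt_of_pos_of_lt_minimalPeriod hi.ne' (hαm ▸ him))
  set b := f^[m - 1] α
  have hfb : f b = α :=
    map_iterate_sub_one_of_isPeriodicPt (by omega) (hαm ▸ isPeriodicPt_minimalPeriod f α)
  have hαb : α < b := hα_lt (m - 1) (by omega) (by omega)
  obtain ⟨i, hib, hbi⟩ : ∃ i, f^[i] α < b ∧ b ≤ f (f^[i] α) := by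
    by_contra! hstay
    have hbelow (i : ℕ) : f^[i] α < b := by
      induction i with
      | zero => exact hαb
      | succ i ih => exact iterate_succ_apply' f i α ▸ hstay i ih
    exact lt_irrefl b (hbelow (m - 1))
  obtain ⟨v, hv, hfv⟩ := intermediate_value_Icc' hib.le hf.continuousOn ⟨hfb.trans_le hαb.le, hbi⟩
  have hffv : f^[2] v = α := (congrArg f hfv).trans hfb
  have hvb : v ≠ b := by
    rintro rfl
    exact hαb.ne (hfb.symm.trans hfv)
  have hαv : α ≠ v := by
    rintro rfl
    exact (hα_lt 2 (by omega) (by omega)).ne' hffv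
  exact ⟨α, v, hαm, hαmin, hα_lt 2 (by omega) (by omega), ((hαmin i).trans hv.1).lt_of_ne hαv,
    hfv ▸ hv.2.lt_of_ne hvb, hfv, hffv⟩

theorem exists_lt_iterate_two_and_forall_lt_map (hf : Continuous f) {α v : X} (hαv : α < v)
    (hα : α < f^[2] α) (hv : v < f v) (hv2 : f^[2] v < v) :
    ∃ u < v, u < f^[2] u ∧ ∀ x ∈ Icc u v, x < f x := by
  by_cases hall : ∀ x ∈ Icc α v, x < f x
  · exact ⟨α, hαv, hα, hall⟩
  push Not at hall
  obtain ⟨x, hx, hfx⟩ := hall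
  obtain ⟨w, hw, hfw, hlt⟩ := exists_last_eq hx.2 continuousOn_id hf.continuousOn hfx hv
  obtain ⟨z, hz, hfz⟩ := exists_isFixedPt_mem_Ioo hv.le hf.continuousOn hv (hv2.trans hv)
  obtain ⟨u, hu, rfl⟩ := intermediate_value_Ioo hw.2.le hf.continuousOn
    ⟨hfw.symm.trans_lt (hw.2.trans hz.1), hz.2⟩
  exact ⟨u, hu.2, (hu.2.trans hz.1).trans_eq hfz.symm,
    fun x hx ↦ hlt x ⟨hu.1.trans_le hx.1, hx.2⟩⟩

theorem exists_last_isPeriodicPt_two (hf : Continuous f) {α v : X} (hαv : α < v)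
    (hα : α < f^[2] α) (hv : v < f v) (hv2 : f^[2] v < v) :
    ∃ y < v, IsPeriodicPt f 2 y ∧ y < f y ∧ ∀ x ∈ Ioc y v, f^[2] x < x := by
  obtain ⟨u, huv, hu, hlt⟩ := exists_lt_iterate_two_and_forall_lt_map hf hαv hα hv hv2
  obtain ⟨y, hy, hfy, hlt2⟩ := exists_last_eq huv.le (hf.iterate 2).continuousOn continuousOn_id
    hu.le hv2
  exact ⟨y, hy.2, hfy, hlt y (Ico_subset_Icc_self hy), hlt2⟩

theorem HasPeriod.two (hf : Continuous f) (hm : 2 ≤ m) (h : HasPeriod f m) : HasPeriod f 2 := by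
  rcases hm.eq_or_lt with rfl | hm
  · exact h
  obtain ⟨α, v, -, -, hα, hαv, hv, -, hv2⟩ := h.exists_least_point_and_preimage hf hm
  obtain ⟨y, -, hy, hfy, -⟩ := exists_last_isPeriodicPt_two hf hαv hα hv (hv2.trans_lt hαv)
  exact ⟨y, minimalPeriod_eq_prime hy hfy.ne'⟩

theorem HasPeriod.odd_of_lt (hf : Continuous f) {q : ℕ} (hm : 1 < m) (hmo : Odd m) (hqo : Odd q)
    (hmq : m < q) (h : HasPeriod f m) : HasPeriod f q := by
  obtain ⟨i, rfl⟩ := hmo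
  obtain ⟨j, rfl⟩ := hqo
  obtain ⟨α, v, hαm, -, hα, hαv, hv, -, hv2⟩ := h.exists_least_point_and_preimage hf (by omega)
  obtain ⟨y, hyv, hy, hfy, hlt⟩ := exists_last_isPeriodicPt_two hf hαv hα hv (hv2.trans_lt hαv)
  have hodd_iterate (n : ℕ) : f^[2 * n + 1] y = f y := by
    rw [iterate_succ_apply', (hy.mul_const n).eq]
  have hfixed (n : ℕ) {p : X} (hyp : y < p) (hp : f^[2 * n + 1] p < p) :
      ∃ p' ∈ Ioo y p, IsPeriodicPt f (2 * n + 1) p' :=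
    exists_isFixedPt_mem_Ioo hyp.le (hf.iterate _).continuousOn (hfy.trans_eq (hodd_iterate n).symm)
      hp
  have hα_per : f^[2 * i + 1] α = α := hαm ▸ iterate_minimalPeriod
  obtain ⟨p₀, hp₀, hper₀⟩ := hfixed (i + 1) hyv (by
    rwa [show 2 * (i + 1) + 1 = 2 * i + 1 + 2 by ring, iterate_add_apply, hv2, hα_per])
  have hstep (n : ℕ) (p : X) (hp : p ∈ Ioc y v) (hper : IsPeriodicPt f (2 * n + 1) p) :
      ∃ p' ∈ Ioo y p, IsPeriodicPt f (2 * (n + 1) + 1) p' :=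
    hfixed (n + 1) hp.1 (by
      rw [show 2 * (n + 1) + 1 = 2 + (2 * n + 1) by ring, iterate_add_apply, hper.eq]
      exact hlt p hp)
  have hdvd (k : ℕ) (hk : k ∣ 2 * j + 1) : ∃ n, 2 * n + 1 = k :=
    ((odd_two_mul_add_one j).of_dvd_nat hk).imp fun _ ↦ Eq.symm
  obtain ⟨p, -, hp⟩ := exists_minimalPeriod_eq_of_descent (φ := (2 * · + 1)) hf
    (fun _ _ ↦ by grind) hstep (show i + 1 ≤ j by omega) (Ioo_subset_Ioc_self hp₀) hper₀ hdvd
    (fun hper ↦ hfy.ne' ((hodd_iterate j).symm.trans hper))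
  exact ⟨p, hp⟩

theorem exists_minimalPeriod_eq_of_horseshoe {g : X → X} (hg : Continuous g) {d s e : X}
    (hds : d < s) (hse : s < e) (hd : g d = e) (he : g e = e) (hs : g s ≤ d) {n : ℕ}
    (hn : 0 < n) : ∃ x ∈ Ioc d s, minimalPeriod g x = n := by
  have hd_iterate (i : ℕ) : g^[i + 1] d = e := by
    rw [iterate_succ_apply, hd, iterate_fixed he]
  have hfixed (i : ℕ) {w : X} (hdw : d < w) (hw : g^[i + 1] w < w) :
      ∃ x ∈ Ioo d w, IsPeriodicPt g (i + 1) x :=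
    exists_isFixedPt_mem_Ioo hdw.le (hg.iterate _).continuousOn
      ((hds.trans hse).trans_eq (hd_iterate i).symm) hw
  have hstep (i : ℕ) (p : X) (hp : p ∈ Ioc d s) (hper : IsPeriodicPt g (i + 1) p) :
      ∃ p' ∈ Ioo d p, IsPeriodicPt g (i + 1 + 1) p' := by
    obtain ⟨w, hw, hws, -⟩ := exists_first_eq hp.1.le continuousOn_const
      (hg.iterate (i + 1)).continuousOn (hse.trans_eq (hd_iterate i).symm) (hper.eq.trans_le hp.2)
    obtain ⟨p', hp', hper'⟩ := hfixed (i + 1) hw.1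
      (by rw [iterate_succ_apply', ← hws]; exact hs.trans_lt hw.1)
    exact ⟨p', ⟨hp'.1, hp'.2.trans_le hw.2⟩, hper'⟩
  obtain ⟨i, rfl⟩ := Nat.exists_eq_add_one.2 hn
  obtain ⟨p₀, hp₀, hper₀⟩ := hfixed 0 hds (hs.trans_lt hds)
  exact exists_minimalPeriod_eq_of_descent (φ := (· + 1)) hg (fun _ _ ↦ by simp) hstep
    i.zero_le (Ioo_subset_Ioc_self hp₀) hper₀
    (fun k hk ↦ Nat.exists_eq_add_one.2 (Nat.pos_of_dvd_of_pos hk hn) |>.imp fun _ ↦ Eq.symm)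
    (fun hper ↦ (hds.trans hse).ne' ((hd_iterate i).symm.trans hper))

/-- Truncating `g` below at `d` turns it into the horseshoe of
`exists_minimalPeriod_eq_of_horseshoe`, and a periodic orbit of the truncation never reaches `d`, so
it is an orbit of `g`. -/
theorem exists_minimalPeriod_eq_and_iterate_mem_Ioo {g : X → X} (hg : Continuous g) {d v e : X}
    (hv : v ∈ Ioo d e) (hd : g d = e) (he : g e = e) (hgv : g v ≤ d)
    (hlt : ∀ x ∈ Ioo d e, g x < e) {k : ℕ} (hk : 0 < k) :
    ∃ p, minimalPeriod g p = k ∧ ∀ i, g^[i] p ∈ Ioo d e := by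
  have hde : d < e := hv.1.trans hv.2
  obtain ⟨p, hp, rfl⟩ := exists_minimalPeriod_eq_of_horseshoe (g := fun x ↦ max (g x) d)
    (hg.max continuous_const) hv.1 hv.2 (by rw [hd, max_eq_left hde.le])
    (by rw [he, max_eq_left hde.le]) (max_le hgv le_rfl) hk
  have horbit := iterate_eq_and_mem_Ioo_of_isPeriodicPt_max hd he hlt ⟨hp.1, hp.2.trans_lt hv.2⟩ hk
    (isPeriodicPt_minimalPeriod _ p)
  refine ⟨p, minimalPeriod_eq_minimalPeriod_iff.2 fun i ↦ ?_, fun i ↦ (horbit i).2⟩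
  simp only [IsPeriodicPt, IsFixedPt, (horbit i).1]

theorem exists_first_iterate_two_eq_self (hf : Continuous f) {v : X} (hv : v < f v)
    (hv2 : f^[2] v < v) :
    ∃ e ∈ Ioo v (f v), f^[2] e = e ∧ e ≤ f e ∧ ∀ x ∈ Ico v e, f^[2] x < x := by
  obtain ⟨z, hz, hfz, hltz⟩ := exists_first_eq hv.le continuousOn_id hf.continuousOn hv
    (hv2.trans hv).le
  have hzv : z ≠ f v := by
    rintro rfl
    exact (hv2.trans hv).ne' hfz
  have hf2z : f^[2] z = z := IsFixedPt.iterate hfz.symm 2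
  obtain ⟨e, he, hfe, hlte⟩ := exists_first_eq hz.1.le (hf.iterate 2).continuousOn
    continuousOn_id hv2 hf2z.ge
  refine ⟨e, ⟨he.1, he.2.trans_lt (hz.2.lt_of_ne hzv)⟩, hfe, ?_, hlte⟩
  rcases he.2.eq_or_lt with rfl | hez
  · exact hfz.le
  · exact (hltz e ⟨he.1.le, hez⟩).le

theorem HasPeriod.exists_horseshoe_of_odd (hf : Continuous f) (hm : 1 < m) (hmo : Odd m)
    (h : HasPeriod f m) :
    ∃ d e, ∃ v ∈ Ioo d e, f^[2] d = e ∧ f^[2] e = e ∧ f^[2] v ≤ d ∧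
      ∀ x ∈ Ioo d e, f^[2] x < e ∧ e < f x := by
  obtain ⟨α, v, -, hαmin, -, hαv, hv, hfv, hv2⟩ :=
    h.exists_least_point_and_preimage hf (by obtain ⟨i, rfl⟩ := hmo; omega)
  obtain ⟨e, he, hf2e, hfe, hlt⟩ := exists_first_iterate_two_eq_self hf hv (hv2.trans_lt hαv)
  have hmin2 (i : ℕ) : α ≤ (f^[2])^[i] α := iterate_mul f 2 i ▸ hαmin (2 * i)
  have hle (x : X) (hx : x ∈ Ioc v e) : f^[2] x ≤ e := by
    rcases hx.2.eq_or_lt with rfl | hxe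
    · exact hf2e.le
    · exact ((hlt x ⟨hx.1.le, hxe⟩).trans hxe).le
  obtain ⟨j, hj⟩ := hmo
  have hescape : e < (f^[2])^[j] α := by
    rw [← iterate_mul, show 2 * j = m - 1 by omega, ← hfv]
    exact he.2
  obtain ⟨x₀, hx₀, hex₀⟩ := exists_lt_map_of_lt_iterate (hαv.trans he.1).le hmin2 hle hescape
  obtain ⟨d, hd, hf2d, hltd⟩ := exists_last_eq hx₀.2 (hf.iterate 2).continuousOn
    continuousOn_const hex₀.le (hv2.trans_lt (hαv.trans he.1))
  have hf2 (x : X) (hx : x ∈ Ioo d e) : f^[2] x < e := by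
    rcases le_total x v with hxv | hvx
    · exact hltd x ⟨hx.1, hxv⟩
    · exact (hlt x ⟨hvx, hx.2⟩).trans hx.2
  have hve : v ∈ Ioo d e := ⟨hd.2, he.1⟩
  refine ⟨d, e, v, hve, hf2d, hf2e, hv2.trans_le (hx₀.1.trans hd.1), fun x hx ↦ ⟨hf2 x hx, ?_⟩⟩
  by_contra! hfx
  obtain ⟨w, hw, hfw⟩ := isPreconnected_Ioo.intermediate_value₂ hx hve hf.continuousOn
    continuousOn_const hfx he.2.le
  exact (hf2 w hw).not_ge (hfe.trans_eq (congrArg f hfw).symm)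

theorem HasPeriod.two_mul_of_odd (hf : Continuous f) (hm : 1 < m) (hmo : Odd m)
    (h : HasPeriod f m) {k : ℕ} (hk : 0 < k) : HasPeriod f (2 * k) := by
  obtain ⟨d, e, v, hv, hd, he, hf2v, hlt⟩ := h.exists_horseshoe_of_odd hf hm hmo
  obtain ⟨p, hpk, horbit⟩ := exists_minimalPeriod_eq_and_iterate_mem_Ioo (hf.iterate 2) hv hd he
    hf2v (fun x hx ↦ (hlt x hx).1) hk
  refine ⟨p, ?_⟩
  have heven : 2 ∣ minimalPeriod f p := by
    by_contra hodd
    obtain ⟨j, hj⟩ := Nat.not_even_iff_odd.1 (mt Even.two_dvd hodd)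
    have hreturn : f ((f^[2])^[j] p) = p := by
      rw [← iterate_mul, ← iterate_succ_apply' f, Nat.succ_eq_add_one, ← hj, iterate_minimalPeriod]
    exact ((horbit 0).2.trans (hlt _ (horbit j)).2).ne' hreturn
  rw [minimalPeriod_iterate_eq_div_gcd two_ne_zero, Nat.gcd_eq_right heven] at hpk
  rw [← hpk, Nat.mul_div_cancel' heven]

theorem HasPeriod.two_pow (hf : Continuous f) {b k : ℕ} (hk : 0 < k)
    (h : HasPeriod f (2 ^ b * k)) : HasPeriod f (2 ^ b) := by
  rcases b with - | b
  · exact h.one hf (by positivity)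
  · rw [pow_succ, mul_assoc] at h
    exact ((h.iterate (by positivity)).two (hf.iterate _) (by omega)).of_iterate_two_pow (k := 1)

theorem HasPeriod.two_pow_mul_of_lt (hf : Continuous f) {a b p k : ℕ} (hp : 1 < p) (hpo : Odd p)
    (hab : a < b) (hk : 0 < k) (h : HasPeriod f (2 ^ a * p)) : HasPeriod f (2 ^ b * k) := by
  obtain ⟨r, rfl⟩ := Nat.exists_eq_add_of_lt hab
  rw [show 2 ^ (a + r + 1) * k = 2 ^ a * (2 * (2 ^ r * k)) by ring]
  exact ((h.iterate (by positivity)).two_mul_of_odd (hf.iterate _) hp hpo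
    (by positivity)).of_iterate_two_pow

theorem HasPeriod.two_pow_mul_odd_of_lt (hf : Continuous f) {a p q : ℕ} (hp : 1 < p)
    (hpo : Odd p) (hqo : Odd q) (hpq : p < q) (h : HasPeriod f (2 ^ a * p)) :
    HasPeriod f (2 ^ a * q) := by
  obtain ⟨c, hca, -, hq⟩ := ((h.iterate (by positivity)).odd_of_lt (hf.iterate _) hp hpo hqo
    hpq).of_iterate_prime_pow Nat.prime_two
  rcases hca.eq_or_lt with rfl | hca
  · exact hq
  · exact hq.two_pow_mul_of_lt hf (hp.trans hpq) hqo hca hqo.pos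

theorem HasPeriod.of_sharkovskyLt (hf : Continuous f) {n : ℕ} (hmn : SharkovskyLt m n)
    (h : HasPeriod f m) : HasPeriod f n := by
  obtain ⟨a, p, b, q, hpo, hqo, rfl, rfl, hcases⟩ := hmn
  have hpow (hba : b ≤ a) : HasPeriod f (2 ^ b * 1) := by
    obtain ⟨r, rfl⟩ := Nat.exists_eq_add_of_le hba
    rw [pow_add, mul_assoc] at h
    rw [mul_one]
    exact h.two_pow hf (mul_pos (by positivity) hpo.pos)
  rcases hcases with ⟨hp, -, hab | ⟨rfl, hpq⟩⟩ | ⟨hp, rfl⟩ | ⟨-, rfl, hba⟩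
  · exact h.two_pow_mul_of_lt hf hp hpo hab hqo.pos
  · exact h.two_pow_mul_odd_of_lt hf hp hpo hqo hpq
  · rcases lt_or_ge a b with hab | hba
    · exact h.two_pow_mul_of_lt hf hp hpo hab one_pos
    · exact hpow hba
  · exact hpow hba.le

theorem sharkovsky_forcing_general {s : Set X} [s.OrdConnected] (hf : ContinuousOn f s)
    (hmaps : MapsTo f s s) {n : ℕ} (hmn : SharkovskyLt m n)
    (hx : ∃ x ∈ s, minimalPeriod f x = m) : ∃ y ∈ s, minimalPeriod f y = n := by
  obtain ⟨x, hxs, hxm⟩ := hx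
  have : Inhabited s := ⟨⟨x, hxs⟩⟩
  have hperiod : HasPeriod (hmaps.restrict f s s) m :=
    ⟨⟨x, hxs⟩, (minimalPeriod_restrict hmaps _).trans hxm⟩
  obtain ⟨y, hy⟩ := hperiod.of_sharkovskyLt (hf.mapsToRestrict hmaps) hmn
  exact ⟨y, y.2, (minimalPeriod_restrict hmaps y).symm.trans hy⟩

end LinearContinuum

theorem sharkovsky_forcing (a b : ℝ) (hab : a ≤ b) (f : ℝ → ℝ)
    (hcont : ContinuousOn f (Set.Icc a b))
    (hmaps : Set.MapsTo f (Set.Icc a b) (Set.Icc a b))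
    (m n : ℕ) (hm : 0 < m) (hn : 0 < n) (hmn : SharkovskyLt m n)
    (hx : ∃ x ∈ Set.Icc a b, PeriodPt f m x) :
    ∃ y ∈ Set.Icc a b, PeriodPt f n y := by
  simp only [PeriodPt, ← minimalPeriod_eq_iff_of_pos hm, ← minimalPeriod_eq_iff_of_pos hn] at hx ⊢
  exact sharkovsky_forcing_general hcont hmaps hmn hx
end

section
/- For every positive integer n there exists a continuous map f : [0,1] → [0,1] that has a period-n point but has no period-m point for any positive integer m with m ≺ n in the Sharkovsky ordering. -/
open Set Function

lemma minimalPeriod_eq_of_semiconj_of_injective {α β : Type*} {f : α → α} {g : β → β} {e : α → β}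
    (h : Semiconj e f g) (he : Injective e) (x : α) :
    minimalPeriod g (e x) = minimalPeriod f x := by
  refine minimalPeriod_eq_minimalPeriod_iff.2 fun n ↦ ?_
  simp only [IsPeriodicPt, IsFixedPt, ← (h.iterate_right n).eq, he.eq_iff]

lemma iterate_two_mul_succ {α : Type*} (f : α → α) (j : ℕ) (x : α) :
    f^[2 * (j + 1)] x = f (f (f^[2 * j] x)) := by
  rw [mul_add_one, iterate_succ_apply', iterate_succ_apply']

lemma iterate_ne_of_isFixedPt {α : Type*} {f : α → α} {c x : α} (hc : IsFixedPt f c)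
    (hx : 1 < minimalPeriod f x) (j : ℕ) : f^[j] x ≠ c := by
  rintro rfl
  have hx' : x ∈ periodicPts f := minimalPeriod_pos_iff_mem_periodicPts.1 (by omega)
  rw [← minimalPeriod_eq_one_iff_isFixedPt, minimalPeriod_apply_iterate hx'] at hc
  omega

lemma iff_zero_iff_even_of_alternating {P : ℕ → Prop} (h : ∀ i, P (i + 1) ↔ ¬ P i) (i : ℕ) :
    (P i ↔ P 0) ↔ Even i := by
  induction i with
  | zero => simp
  | succ i ih =>
    rw [h, Nat.even_add_one]
    tauto

lemma exists_iterate_lt_and_iterate_succ_lt {α : Type*} [LinearOrder α] {f : α → α} {c x : α}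
    {m : ℕ} (hf : ∀ y, c < y → f y < c) (hm : Odd m) (hx : IsPeriodicPt f m x)
    (hc : ∀ j, f^[j] x ≠ c) : ∃ j, f^[j] x < c ∧ f^[j + 1] x < c := by
  by_contra! hleft
  have halternate : ∀ j, f^[j + 1] x < c ↔ ¬ f^[j] x < c := by
    refine fun j ↦ ⟨fun h h' ↦ (hleft j h').not_gt h, fun h ↦ ?_⟩
    rw [iterate_succ_apply']
    exact hf _ ((not_lt.1 h).lt_of_ne' (hc j))
  have heven : Even m :=
    (iff_zero_iff_even_of_alternating (P := fun j ↦ f^[j] x < c) halternate m).1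
      (by rw [hx.eq, iterate_zero_apply])
  exact Nat.not_even_iff_odd.2 hm heven

lemma eq_of_isPeriodicPt_of_mul_dist_le {X : Type*} [MetricSpace X] {g : X → X} {c x : X} {s : ℝ}
    {m : ℕ} (hs : 1 < s) (hm : m ≠ 0) (hx : IsPeriodicPt g m x)
    (h : ∀ j, s * dist (g^[j] x) c ≤ dist (g^[j + 1] x) c) : x = c := by
  by_contra hne
  have hdist : 0 < dist x c := dist_pos.2 hne
  have hgrowth : s ^ m * dist x c ≤ dist (g^[m] x) c :=
    geom_le (u := fun j ↦ dist (g^[j] x) c) (by linarith) m fun j _ ↦ h j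
  rw [hx.eq] at hgrowth
  exact hgrowth.not_gt (lt_mul_of_one_lt_left hdist (one_lt_pow₀ hs hm))

lemma exists_eq_add_one_of_two_mul_eq_two_pow_mul {m a p : ℕ} (hp : Odd p)
    (h : 2 * m = 2 ^ a * p) : ∃ b, a = b + 1 ∧ m = 2 ^ b * p := by
  cases a with
  | zero =>
    rw [pow_zero, one_mul] at h
    exact absurd (h ▸ even_two_mul m) (Nat.not_even_iff_odd.2 hp)
  | succ b => exact ⟨b, rfl, Nat.eq_of_mul_eq_mul_left two_pos (by rw [h, pow_succ']; ring)⟩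

lemma eq_zero_of_odd_two_pow_mul {a p : ℕ} (h : Odd (2 ^ a * p)) : a = 0 := by
  by_contra ha
  exact Nat.not_even_iff_odd.2 (Nat.odd_mul.1 h).1 (Nat.even_pow.2 ⟨even_two, ha⟩)

namespace SharkovskyLt

variable {m n : ℕ}

lemma one_lt_left (h : SharkovskyLt m n) : 1 < m := by
  obtain ⟨a, p, b, q, hp, -, rfl, -, h⟩ := h
  rcases eq_or_ne p 1 with rfl | hp1
  · rw [mul_one]
    exact Nat.one_lt_two_pow (by omega)
  · have : 1 < p := lt_of_le_of_ne hp.pos hp1.symm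
    exact this.trans_le (Nat.le_mul_of_pos_left p (by positivity))

lemma of_two_mul (h : SharkovskyLt (2 * m) (2 * n)) : SharkovskyLt m n := by
  obtain ⟨a, p, b, q, hp, hq, hm, hn, h⟩ := h
  obtain ⟨a, rfl, hm'⟩ := exists_eq_add_one_of_two_mul_eq_two_pow_mul hp hm
  obtain ⟨b, rfl, hn'⟩ := exists_eq_add_one_of_two_mul_eq_two_pow_mul hq hn
  exact ⟨a, p, b, q, hp, hq, hm', hn', by omega⟩

lemma odd_and_lt_of_odd (h : SharkovskyLt m n) (hn : Odd n) (hn1 : 1 < n) : Odd m ∧ m < n := by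
  obtain ⟨a, p, b, q, hp, -, rfl, rfl, h⟩ := h
  obtain rfl := eq_zero_of_odd_two_pow_mul hn
  rw [pow_zero, one_mul] at hn1 ⊢
  obtain ⟨rfl, hpq⟩ : a = 0 ∧ p < q := by omega
  rw [pow_zero, one_mul]
  exact ⟨hp, hpq⟩

end SharkovskyLt

lemma periodPt_iff_minimalPeriod_eq {f : ℝ → ℝ} {m : ℕ} {x : ℝ} (hm : 0 < m) :
    PeriodPt f m x ↔ minimalPeriod f x = m := by
  constructor
  · rintro ⟨hx, hlt⟩
    have hx : IsPeriodicPt f m x := hx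
    refine (hx.minimalPeriod_le hm).eq_of_not_lt fun h ↦ ?_
    exact hlt _ (hx.minimalPeriod_pos hm) h iterate_minimalPeriod
  · rintro rfl
    exact ⟨iterate_minimalPeriod,
      fun i hi hlt ↦ not_isPeriodicPt_of_pos_of_lt_minimalPeriod hi.ne' hlt⟩

/-- `f` is a continuous self-map of `s` showing that `n` does not force any period preceding it
in the Sharkovsky ordering. Periods are encoded by `Function.minimalPeriod`, whose value at a
nonperiodic point is `0`; this is harmless, as `0` does not precede any number. -/
structure IsSharkovskyExtremal {α : Type*} [TopologicalSpace α] (f : α → α) (s : Set α) (n : ℕ) :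
    Prop where
  continuousOn : ContinuousOn f s
  mapsTo : MapsTo f s s
  exists_minimalPeriod_eq : ∃ x ∈ s, minimalPeriod f x = n
  not_sharkovskyLt : ∀ x ∈ s, ¬ SharkovskyLt (minimalPeriod f x) n

lemma isSharkovskyExtremal_id {α : Type*} [TopologicalSpace α] {s : Set α} (hs : s.Nonempty) :
    IsSharkovskyExtremal id s 1 where
  continuousOn := continuousOn_id
  mapsTo := mapsTo_id s
  exists_minimalPeriod_eq := hs.imp fun _ hx ↦ ⟨hx, minimalPeriod_id⟩
  not_sharkovskyLt _ _ h := h.one_lt_left.ne' minimalPeriod_id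

lemma IsSharkovskyExtremal.conj {α β : Type*} [TopologicalSpace α] [TopologicalSpace β]
    {f : α → α} {s : Set α} {n : ℕ} (h : IsSharkovskyExtremal f s n) (e : α ≃ₜ β) :
    IsSharkovskyExtremal (e ∘ f ∘ e.symm) (e '' s) n := by
  have hsemi : Semiconj e f (e ∘ f ∘ e.symm) := fun x ↦ by simp
  have hperiod := minimalPeriod_eq_of_semiconj_of_injective hsemi e.injective
  have hsymm : MapsTo e.symm (e '' s) s := by
    rintro _ ⟨x, hx, rfl⟩
    rwa [e.symm_apply_apply]
  refine ⟨?_, ?_, ?_, ?_⟩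
  · exact e.continuous.comp_continuousOn (h.continuousOn.comp e.symm.continuous.continuousOn hsymm)
  · exact (mapsTo_image e s).comp (h.mapsTo.comp hsymm)
  · obtain ⟨x, hx, hxn⟩ := h.exists_minimalPeriod_eq
    exact ⟨e x, mem_image_of_mem e hx, (hperiod x).trans hxn⟩
  · rintro _ ⟨x, hx, rfl⟩
    rw [hperiod]
    exact h.not_sharkovskyLt x hx

/-! ### Odd periods -/

/-- The piecewise linear map with nodes `-k ↦ 0`, `-k + 1 ↦ k`, `0 ↦ 1`, `1 ↦ -1`, `k ↦ -k`. It is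
meant on `[-k, k]` for a positive integer `k`, where `0, 1, -1, 2, -2, …, k, -k` is a cycle. -/
noncomputable def stefanMap (k y : ℝ) : ℝ :=
  min (k * (y + k)) (max (-y) (min (1 - y) (1 - 2 * y)))

section StefanMap

variable {k y : ℝ}

lemma continuous_stefanMap : Continuous (stefanMap k) := by
  unfold stefanMap
  fun_prop

lemma stefanMap_neg_self (hk : 0 ≤ k) : stefanMap k (-k) = 0 := by
  rw [stefanMap, neg_add_cancel, mul_zero, neg_neg]
  exact min_eq_left (le_max_of_le_left hk)

lemma stefanMap_of_nonpos (hk : 1 ≤ k) (hky : -k + 1 ≤ y) (hy : y ≤ 0) :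
    stefanMap k y = 1 - y := by
  rw [stefanMap, min_eq_left (by linarith : 1 - y ≤ 1 - 2 * y),
    max_eq_right (by linarith : -y ≤ 1 - y), min_eq_right (by nlinarith)]

lemma stefanMap_of_one_le (hk : 0 < k) (hy : 1 ≤ y) : stefanMap k y = -y := by
  rw [stefanMap, min_eq_right (by linarith : 1 - 2 * y ≤ 1 - y),
    max_eq_left (by linarith : 1 - 2 * y ≤ -y), min_eq_right (by nlinarith)]

lemma stefanMap_le_one_sub : stefanMap k y ≤ 1 - y :=
  (min_le_right _ _).trans (max_le (by linarith) (min_le_left _ _))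

lemma neg_le_stefanMap (hk : 0 ≤ k) (hy : 0 ≤ y) : -y ≤ stefanMap k y :=
  le_min ((neg_nonpos.2 hy).trans (by positivity)) (le_max_left _ _)

lemma mapsTo_stefanMap (hk : 1 ≤ k) : MapsTo (stefanMap k) (Icc (-k) k) (Icc (-k) k) := by
  rintro y ⟨hky, hyk⟩
  constructor
  · exact le_min (by nlinarith) (le_max_of_le_left (by linarith))
  · rcases le_total y (-k + 1) with h | h
    · exact (min_le_left _ _).trans (by nlinarith)
    · exact stefanMap_le_one_sub.trans (by linarith)

lemma stefanMap_one_third (hk : 1 ≤ k) : stefanMap k (1 / 3) = 1 / 3 := by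
  rw [stefanMap, min_eq_right (by norm_num : (1 : ℝ) - 2 * (1 / 3) ≤ 1 - 1 / 3),
    max_eq_right (by norm_num), min_eq_right (by nlinarith)]
  norm_num

lemma stefanMap_lt_one_third (hy : 1 / 3 < y) : stefanMap k y < 1 / 3 :=
  min_lt_of_right_lt (max_lt (by linarith) (min_lt_of_right_lt (by linarith)))

lemma one_third_lt_stefanMap (hk : 1 ≤ k) (hky : -k + 1 ≤ y) (hy : y < 1 / 3) :
    1 / 3 < stefanMap k y :=
  lt_min (by nlinarith) (lt_max_of_lt_right (lt_min (by linarith) (by linarith)))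

lemma stefanMap_stefanMap_mem_Ico (hk : 1 ≤ k) (hky : -k + 1 ≤ y) (hy : y < 1 / 3) :
    stefanMap k (stefanMap k y) ∈ Ico (y - 1) (1 / 3) := by
  have hright : 1 / 3 < stefanMap k y := one_third_lt_stefanMap hk hky hy
  refine ⟨?_, stefanMap_lt_one_third hright⟩
  calc y - 1 ≤ -stefanMap k y := by linarith [stefanMap_le_one_sub (k := k) (y := y)]
    _ ≤ stefanMap k (stefanMap k y) := neg_le_stefanMap (by linarith) (by linarith)

lemma iterate_two_mul_stefanMap_mem_Ico (hk : 1 ≤ k) (hy : y ∈ Ico 0 (1 / 3)) {j : ℕ}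
    (hj : j ≤ k) : (stefanMap k)^[2 * j] y ∈ Ico (-j : ℝ) (1 / 3) := by
  induction j with
  | zero => simpa using hy
  | succ j ih =>
    push_cast at hj ⊢
    obtain ⟨hlow, hhigh⟩ := ih (by linarith)
    rw [iterate_two_mul_succ]
    have hmem := stefanMap_stefanMap_mem_Ico hk (by linarith) hhigh
    exact ⟨by linarith [hmem.1], hmem.2⟩

lemma two_mul_sub_one_lt_minimalPeriod_stefanMap {x : ℝ} (hk : 1 ≤ k) (hx : x ∈ Icc (-k) k)
    (hone : 1 < minimalPeriod (stefanMap k) x) (hodd : Odd (minimalPeriod (stefanMap k) x)) :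
    2 * k - 1 < minimalPeriod (stefanMap k) x := by
  have hper := isPeriodicPt_minimalPeriod (stefanMap k) x
  obtain ⟨j, hj, hj'⟩ := exists_iterate_lt_and_iterate_succ_lt (fun _ ↦ stefanMap_lt_one_third)
    hodd hper (iterate_ne_of_isFixedPt (stefanMap_one_third hk) hone)
  have hperj := hper.apply_iterate j
  have hmem := (mapsTo_stefanMap hk).iterate j hx
  rw [iterate_succ_apply'] at hj'
  generalize (stefanMap k)^[j] x = y at hj hj' hperj hmem
  obtain ⟨i, hi⟩ := hodd
  rw [hi] at hperj ⊢
  have hy : y < -k + 1 := by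
    by_contra! h
    exact (one_third_lt_stefanMap hk h hj).not_gt hj'
  have hnonneg : 0 ≤ stefanMap k y :=
    le_min (mul_nonneg (by linarith) (by linarith [hmem.1])) (le_max_of_le_left (by linarith))
  by_contra! hik
  push_cast at hik
  have hreturn := (iterate_two_mul_stefanMap_mem_Ico hk ⟨hnonneg, hj'⟩ (j := i) (by linarith)).1
  rw [← iterate_succ_apply, Nat.succ_eq_add_one, hperj.eq] at hreturn
  linarith

lemma iterate_two_mul_stefanMap_zero (hk : 1 ≤ k) {j : ℕ} (hj : j ≤ k) :
    (stefanMap k)^[2 * j] 0 = -j := by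
  induction j with
  | zero => simp
  | succ j ih =>
    push_cast at hj ⊢
    have hj0 : (-j : ℝ) ≤ 0 := neg_nonpos.2 j.cast_nonneg
    rw [iterate_two_mul_succ, ih (by linarith), stefanMap_of_nonpos hk (by linarith) hj0,
      stefanMap_of_one_le (by linarith) (by linarith)]
    ring

end StefanMap

lemma minimalPeriod_stefanMap_zero {k : ℕ} (hk : 1 ≤ k) :
    minimalPeriod (stefanMap k) 0 = 2 * k + 1 := by
  have hk' : (1 : ℝ) ≤ k := by exact_mod_cast hk
  have hper : IsPeriodicPt (stefanMap k) (2 * k + 1) 0 := by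
    rw [IsPeriodicPt, IsFixedPt, iterate_succ_apply', iterate_two_mul_stefanMap_zero hk' le_rfl,
      stefanMap_neg_self (by linarith)]
  have hne_one : minimalPeriod (stefanMap k) 0 ≠ 1 := by
    rw [Ne, minimalPeriod_eq_one_iff_isFixedPt, IsFixedPt,
      stefanMap_of_nonpos hk' (by linarith) le_rfl]
    norm_num
  have hodd : Odd (minimalPeriod (stefanMap k) 0) :=
    (odd_two_mul_add_one k).of_dvd_nat hper.minimalPeriod_dvd
  have hpos := hodd.pos
  have hlow := two_mul_sub_one_lt_minimalPeriod_stefanMap hk' ⟨by linarith, by linarith⟩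
    (by omega) hodd
  rw [sub_lt_iff_lt_add] at hlow
  norm_cast at hlow
  have hhigh := hper.minimalPeriod_le (by omega)
  obtain ⟨i, hi⟩ := hodd
  omega

lemma isSharkovskyExtremal_stefanMap {k : ℕ} (hk : 1 ≤ k) :
    IsSharkovskyExtremal (stefanMap k) (Icc (-k) k) (2 * k + 1) := by
  have hk' : (1 : ℝ) ≤ k := by exact_mod_cast hk
  refine ⟨continuous_stefanMap.continuousOn, mapsTo_stefanMap hk',
    ⟨0, ⟨by linarith, by linarith⟩, minimalPeriod_stefanMap_zero hk⟩, fun x hx h ↦ ?_⟩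
  obtain ⟨hodd, hlt⟩ := h.odd_and_lt_of_odd (odd_two_mul_add_one k) (by omega)
  have hlow := two_mul_sub_one_lt_minimalPeriod_stefanMap hk' hx h.one_lt_left hodd
  rw [sub_lt_iff_lt_add] at hlow
  norm_cast at hlow
  obtain ⟨i, hi⟩ := hodd
  omega

lemma exists_isSharkovskyExtremal_of_odd {n : ℕ} (hn : Odd n) :
    ∃ f : ℝ → ℝ, IsSharkovskyExtremal f (Icc 0 1) n := by
  obtain ⟨k, rfl⟩ := hn
  rcases k.eq_zero_or_pos with rfl | hk
  · exact ⟨id, isSharkovskyExtremal_id (nonempty_Icc.2 zero_le_one)⟩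
  · have hscale : (0 : ℝ) < 1 / (2 * k) := by positivity
    have himage : affineHomeomorph _ (1 / 2) hscale.ne' '' Icc (-k : ℝ) k = Icc 0 1 := by
      rw [affineHomeomorph_image_Icc _ _ _ _ hscale]
      congr 1 <;> field_simp <;> norm_num
    exact ⟨_, himage ▸ (isSharkovskyExtremal_stefanMap hk).conj _⟩

/-! ### Period doubling -/

/-- The period-doubling operator on self-maps of `[0, 1]`: the left third is sent to the right third
by a rescaled copy of `f`, the right third is translated onto the left third, and the middle third
is filled in linearly. -/
noncomputable def doubling (f : ℝ → ℝ) (x : ℝ) : ℝ :=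
  if x ≤ 1 / 3 then (2 + f (3 * x)) / 3
  else if x ≤ 2 / 3 then (2 + f 1) * (2 / 3 - x)
  else x - 2 / 3

section Doubling

variable {f : ℝ → ℝ} {x y : ℝ}

lemma doubling_of_le_one_third (hx : x ≤ 1 / 3) : doubling f x = (2 + f (3 * x)) / 3 :=
  if_pos hx

lemma doubling_of_mem_Icc (hx : x ∈ Icc (1 / 3) (2 / 3)) :
    doubling f x = (2 + f 1) * (2 / 3 - x) := by
  rcases hx.1.eq_or_lt with rfl | h
  · rw [doubling_of_le_one_third le_rfl]
    norm_num
    ring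
  · rw [doubling, if_neg h.not_ge, if_pos hx.2]

lemma doubling_of_two_thirds_le (hx : 2 / 3 ≤ x) : doubling f x = x - 2 / 3 := by
  rcases hx.eq_or_lt with rfl | h
  · rw [doubling_of_mem_Icc (by norm_num)]
    ring
  · rw [doubling, if_neg (by linarith), if_neg h.not_ge]

lemma continuousOn_doubling (hf : ContinuousOn f (Icc 0 1)) :
    ContinuousOn (doubling f) (Icc 0 1) := by
  have hleft : ContinuousOn (doubling f) (Icc 0 (1 / 3)) := by
    have hmaps : MapsTo (fun x : ℝ ↦ 3 * x) (Icc 0 (1 / 3)) (Icc 0 1) :=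
      fun x hx ↦ ⟨by linarith [hx.1], by linarith [hx.2]⟩
    have hcomp : ContinuousOn (fun x ↦ f (3 * x)) (Icc 0 (1 / 3)) := hf.comp (by fun_prop) hmaps
    exact ((hcomp.const_add 2).div_const 3).congr fun x hx ↦ doubling_of_le_one_third hx.2
  have hmiddle : ContinuousOn (doubling f) (Icc (1 / 3) (2 / 3)) :=
    ContinuousOn.congr (by fun_prop) fun x hx ↦ doubling_of_mem_Icc hx
  have hright : ContinuousOn (doubling f) (Icc (2 / 3) 1) :=
    ContinuousOn.congr (by fun_prop) fun x hx ↦ doubling_of_two_thirds_le hx.1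
  rw [← Icc_union_Icc_eq_Icc (by norm_num : (0 : ℝ) ≤ 2 / 3) (by norm_num),
    ← Icc_union_Icc_eq_Icc (by norm_num : (0 : ℝ) ≤ 1 / 3) (by norm_num)]
  exact (hleft.union_of_isClosed hmiddle isClosed_Icc isClosed_Icc).union_of_isClosed hright
    (isClosed_Icc.union isClosed_Icc) isClosed_Icc

lemma mapsTo_doubling (hf : MapsTo f (Icc 0 1) (Icc 0 1)) :
    MapsTo (doubling f) (Icc 0 1) (Icc 0 1) := by
  rintro x ⟨h0, h1⟩
  rcases le_total x (1 / 3) with hleft | hleft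
  · obtain ⟨hf0, hf1⟩ := hf (x := 3 * x) ⟨by linarith, by linarith⟩
    rw [doubling_of_le_one_third hleft]
    exact ⟨by linarith, by linarith⟩
  rcases le_total x (2 / 3) with hright | hright
  · obtain ⟨hf0, hf1⟩ := hf (right_mem_Icc.2 zero_le_one)
    rw [doubling_of_mem_Icc ⟨hleft, hright⟩]
    exact ⟨by nlinarith, by nlinarith⟩
  · rw [doubling_of_two_thirds_le hright]
    exact ⟨by linarith, by linarith⟩

lemma doubling_div_three (hy : y ≤ 1) : doubling f (y / 3) = (2 + f y) / 3 := by
  rw [doubling_of_le_one_third (by linarith), mul_div_cancel₀ y three_ne_zero]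

lemma iterate_two_mul_doubling_div_three (hf : MapsTo f (Icc 0 1) (Icc 0 1)) (hy : y ∈ Icc 0 1)
    (i : ℕ) : (doubling f)^[2 * i] (y / 3) = f^[i] y / 3 := by
  induction i with
  | zero => rfl
  | succ i ih =>
    have hi : f^[i] y ∈ Icc 0 1 := hf.iterate i hy
    rw [iterate_two_mul_succ, ih, doubling_div_three hi.2,
      doubling_of_two_thirds_le (by linarith [(hf hi).1]), iterate_succ_apply']
    ring

lemma two_thirds_le_iterate_doubling_div_three (hf : MapsTo f (Icc 0 1) (Icc 0 1))
    (hy : y ∈ Icc 0 1) (i : ℕ) : 2 / 3 ≤ (doubling f)^[2 * i + 1] (y / 3) := by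
  have hi : f^[i] y ∈ Icc 0 1 := hf.iterate i hy
  rw [iterate_succ_apply', iterate_two_mul_doubling_div_three hf hy, doubling_div_three hi.2]
  linarith [(hf hi).1]

lemma minimalPeriod_doubling_div_three (hf : MapsTo f (Icc 0 1) (Icc 0 1)) (hy : y ∈ Icc 0 1) :
    minimalPeriod (doubling f) (y / 3) = 2 * minimalPeriod f y := by
  refine Nat.dvd_right_iff_eq.1 fun m ↦ ?_
  rw [← isPeriodicPt_iff_minimalPeriod_dvd]
  rcases m.even_or_odd' with ⟨i, rfl | rfl⟩
  · rw [Nat.mul_dvd_mul_iff_left two_pos, ← isPeriodicPt_iff_minimalPeriod_dvd, IsPeriodicPt,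
      IsPeriodicPt, IsFixedPt, IsFixedPt, iterate_two_mul_doubling_div_three hf hy,
      div_left_inj' three_ne_zero]
  · refine iff_of_false (fun h ↦ ?_) fun h ↦ ?_
    · have hlow := two_thirds_le_iterate_doubling_div_three hf hy i
      rw [h.eq] at hlow
      linarith [hy.2]
    · have heven : 2 ∣ 2 * i + 1 := (dvd_mul_right 2 _).trans h
      omega

lemma isFixedPt_doubling_of_iterate_mem_Icc (hf1 : -1 < f 1) {m : ℕ} (hm : m ≠ 0)
    (hx : IsPeriodicPt (doubling f) m x)
    (hmiddle : ∀ j, (doubling f)^[j] x ∈ Icc (1 / 3) (2 / 3)) : IsFixedPt (doubling f) x := by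
  obtain ⟨c, hc⟩ : ∃ c, (2 + f 1) * (2 / 3 - c) = c := by
    have : 3 + f 1 ≠ 0 := by linarith
    exact ⟨(2 + f 1) * 2 / (3 * (3 + f 1)), by field_simp; ring⟩
  have hxc : x = c := by
    refine eq_of_isPeriodicPt_of_mul_dist_le (s := 2 + f 1) (by linarith) hm hx fun j ↦ ?_
    have hlinear : (doubling f)^[j + 1] x - c = -((2 + f 1) * ((doubling f)^[j] x - c)) := by
      rw [iterate_succ_apply', doubling_of_mem_Icc (hmiddle j)]
      linear_combination hc
    rw [Real.dist_eq, Real.dist_eq, hlinear, abs_neg, abs_mul,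
      abs_of_pos (by linarith : 0 < 2 + f 1)]
  exact (doubling_of_mem_Icc (hmiddle 0)).trans (by rw [iterate_zero_apply, hxc, hc])

lemma minimalPeriod_doubling_le_one_or_eq_two_mul (hf : MapsTo f (Icc 0 1) (Icc 0 1))
    (hx : x ∈ Icc 0 1) :
    minimalPeriod (doubling f) x ≤ 1 ∨
      ∃ y ∈ Icc 0 1, minimalPeriod (doubling f) x = 2 * minimalPeriod f y := by
  by_cases hper : x ∈ periodicPts (doubling f)
  swap
  · exact .inl ((minimalPeriod_eq_zero_of_notMem_periodicPts hper).trans_le zero_le_one)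
  have hmem (j : ℕ) : (doubling f)^[j] x ∈ Icc 0 1 := (mapsTo_doubling hf).iterate j hx
  by_cases! hleft : ∃ j, (doubling f)^[j] x ≤ 1 / 3
  · obtain ⟨j, hj⟩ := hleft
    have hy : 3 * (doubling f)^[j] x ∈ Icc 0 1 :=
      ⟨by linarith [(hmem j).1], by linarith⟩
    refine .inr ⟨_, hy, ?_⟩
    rw [← minimalPeriod_doubling_div_three hf hy, mul_div_cancel_left₀ _ three_ne_zero,
      minimalPeriod_apply_iterate hper]
  · have hmiddle (j : ℕ) : (doubling f)^[j] x ∈ Icc (1 / 3) (2 / 3) := by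
      refine ⟨(hleft j).le, ?_⟩
      by_contra! hright
      have hnext := hleft (j + 1)
      rw [iterate_succ_apply', doubling_of_two_thirds_le hright.le] at hnext
      linarith [(hmem j).2]
    obtain ⟨m, hm, hxm⟩ := hper
    have hf1 : 0 ≤ f 1 := (hf (right_mem_Icc.2 zero_le_one)).1
    have hfix := isFixedPt_doubling_of_iterate_mem_Icc (by linarith) hm.ne' hxm hmiddle
    exact .inl (minimalPeriod_eq_one_iff_isFixedPt.2 hfix).le

lemma IsSharkovskyExtremal.doubling {n : ℕ} (h : IsSharkovskyExtremal f (Icc 0 1) n) :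
    IsSharkovskyExtremal (doubling f) (Icc 0 1) (2 * n) := by
  refine ⟨continuousOn_doubling h.continuousOn, mapsTo_doubling h.mapsTo, ?_, fun x hx hlt ↦ ?_⟩
  · obtain ⟨y, hy, rfl⟩ := h.exists_minimalPeriod_eq
    exact ⟨y / 3, ⟨by linarith [hy.1], by linarith [hy.2]⟩,
      minimalPeriod_doubling_div_three h.mapsTo hy⟩
  · rcases minimalPeriod_doubling_le_one_or_eq_two_mul h.mapsTo hx with hle | ⟨y, hy, hxy⟩
    · exact hle.not_gt hlt.one_lt_left
    · rw [hxy] at hlt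
      exact h.not_sharkovskyLt y hy hlt.of_two_mul

end Doubling

lemma exists_isSharkovskyExtremal {n : ℕ} (hn : n ≠ 0) :
    ∃ f : ℝ → ℝ, IsSharkovskyExtremal f (Icc 0 1) n := by
  obtain ⟨b, q, hq, rfl⟩ := Nat.exists_eq_two_pow_mul_odd hn
  clear hn
  induction b with
  | zero => simpa using exists_isSharkovskyExtremal_of_odd hq
  | succ b ih =>
    obtain ⟨f, hf⟩ := ih
    rw [pow_succ', mul_assoc]
    exact ⟨doubling f, hf.doubling⟩

theorem sharkovsky_converse (n : ℕ) (hn : 0 < n) :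
    ∃ f : ℝ → ℝ, ContinuousOn f (Set.Icc 0 1) ∧
      Set.MapsTo f (Set.Icc 0 1) (Set.Icc 0 1) ∧
      (∃ x ∈ Set.Icc (0:ℝ) 1, PeriodPt f n x) ∧
      ∀ m : ℕ, 0 < m → SharkovskyLt m n → ¬ ∃ x ∈ Set.Icc (0:ℝ) 1, PeriodPt f m x := by
  obtain ⟨f, hf⟩ := exists_isSharkovskyExtremal hn.ne'
  refine ⟨f, hf.continuousOn, hf.mapsTo, ?_, ?_⟩
  · obtain ⟨x, hx, hxn⟩ := hf.exists_minimalPeriod_eq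
    exact ⟨x, hx, (periodPt_iff_minimalPeriod_eq hn).2 hxn⟩
  · rintro m hm hlt ⟨x, hx, hxm⟩
    rw [periodPt_iff_minimalPeriod_eq hm] at hxm
    exact hf.not_sharkovskyLt x hx (hxm ▸ hlt)
end

section
/- If a continuous map f : I → I of a compact interval I has a period-m point for some odd integer m ≥ 3, then f has a period-6 point and a period-(2m) point. -/
/-!
Let `a` be the least point of an orbit of odd period greater than one. Some fixed point `z` and some
`v ∈ (a, z)` satisfy `f (f v) = a` and `z < f v`. Let `e` be the first point of `[v, z]` with
`e ≤ f (f e)`, and `d` the last point of `[a, v]` with `e ≤ f (f d)`. Such a `d` exists: otherwise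
`f ∘ f` is below `e` on `[a, e)`, so the even iterates of `a` stay there; moreover `f` does not take
the value `z` there, as `e ≤ z = f z`, so it sends them all above `z`, whereas the odd period sends
one of them to `a`. For the same reason `z ≤ f` on `[d, e]`. Now `f ∘ f` maps each of `[d, v]` and
`[v, e]` over `[d, e]`, so it has a point of every period `n` in `[d, v]` that stays in `[d, e]`.
The odd iterates of this point under `f` are at least `z`, while the point itself lies below `z`;
hence its period under `f` is `2 * n`.
-/

open Function Set

section Period

variable {α : Type*} {f : α → α} {x : α}

theorem minimalPeriod_eq_iff {n : ℕ} (hn : n ≠ 0) :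
    minimalPeriod f x = n ↔ f^[n] x = x ∧ ∀ i, 0 < i → i < n → f^[i] x ≠ x := by
  constructor
  · rintro rfl
    exact ⟨iterate_minimalPeriod, fun i hi hin ↦
      not_isPeriodicPt_of_pos_of_lt_minimalPeriod hi.ne' hin⟩
  · rintro ⟨hx, hlt⟩
    have hper : IsPeriodicPt f n x := hx
    refine (hper.minimalPeriod_le hn.bot_lt).antisymm (not_lt.1 fun h ↦ ?_)
    exact hlt _ (hper.minimalPeriod_pos hn.bot_lt) h iterate_minimalPeriod

theorem minimalPeriod_eq_two_mul {n : ℕ} (hodd : ∀ i, f^[2 * i + 1] x ≠ x)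
    (hn : minimalPeriod f^[2] x = n) : minimalPeriod f x = 2 * n := by
  subst hn
  obtain ⟨k, hk | hk⟩ := Nat.even_or_odd' (minimalPeriod f x)
  · rw [minimalPeriod_iterate_eq_div_gcd two_ne_zero, Nat.gcd_eq_right ⟨k, hk⟩]
    omega
  · exact absurd (hk ▸ iterate_minimalPeriod) (hodd k)

theorem minimalPeriod_mapsTo_restrict {s : Set α} (h : MapsTo f s s) (y : s) :
    minimalPeriod (h.restrict f s s) y = minimalPeriod f y := by
  simp only [minimalPeriod_eq_minimalPeriod_iff, IsPeriodicPt, IsFixedPt, Subtype.ext_iff,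
    h.coe_iterate_restrict, implies_true]

end Period

section Orbit

variable {α : Type*} [LinearOrder α] {f : α → α} {a b x : α}

theorem exists_forall_iterate_le (hx : x ∈ periodicPts f) :
    ∃ k, ∀ j, f^[k] x ≤ f^[j] (f^[k] x) := by
  have hpos := minimalPeriod_pos_of_mem_periodicPts hx
  obtain ⟨k, -, hk⟩ := (Finset.range (minimalPeriod f x)).exists_min_image (f^[·] x)
    ⟨0, Finset.mem_range.2 hpos⟩
  refine ⟨k, fun j ↦ ?_⟩
  rw [← iterate_add_apply, ← iterate_mod_minimalPeriod_eq (n := j + k)]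
  exact hk _ (Finset.mem_range.2 (Nat.mod_lt _ hpos))

theorem iterate_mem_Ico (hmin : ∀ j, a ≤ f^[j] a) (hab : a < b) (hf : ∀ t ∈ Ico a b, f t < b)
    (j : ℕ) : f^[j] a ∈ Ico a b := by
  refine ⟨hmin j, ?_⟩
  induction j with
  | zero => exact hab
  | succ j ih =>
    rw [iterate_succ_apply']
    exact hf _ ⟨hmin j, ih⟩

end Orbit

section Covering

variable {α : Type*} [ConditionallyCompleteLinearOrder α] [DenselyOrdered α] [TopologicalSpace α]
  [OrderTopology α]

theorem exists_Icc_subset_image_eq_Icc {β : Type*} [LinearOrder β] [TopologicalSpace β]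
    [OrderClosedTopology β] {f : α → β} {s t : α} (hst : s ≤ t)
    (hf : ContinuousOn f (Icc s t)) (hfst : f s ≤ f t) :
    ∃ c d, c ≤ d ∧ Icc c d ⊆ Icc s t ∧ f '' Icc c d = Icc (f s) (f t) := by
  obtain ⟨c, ⟨⟨hsc, hct⟩, hc : f c = f s⟩, hcmax⟩ :=
    (isCompact_Icc.of_isClosed_subset (hf.preimage_isClosed_of_isClosed isClosed_Icc
      (isClosed_singleton (x := f s))) inter_subset_left).exists_isGreatest ⟨s, ⟨le_rfl, hst⟩, rfl⟩
  have hfc : ContinuousOn f (Icc c t) := hf.mono (Icc_subset_Icc_left hsc)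
  obtain ⟨d, ⟨⟨hcd, hdt⟩, hd : f d = f t⟩, hdmin⟩ :=
    (isCompact_Icc.of_isClosed_subset (hfc.preimage_isClosed_of_isClosed isClosed_Icc
      (isClosed_singleton (x := f t))) inter_subset_left).exists_isLeast ⟨t, ⟨hct, le_rfl⟩, rfl⟩
  have hfcd : ContinuousOn f (Icc c d) := hfc.mono (Icc_subset_Icc_right hdt)
  refine ⟨c, d, hcd, Icc_subset_Icc hsc hdt, Subset.antisymm ?_ ?_⟩
  · rintro _ ⟨w, ⟨hcw, hwd⟩, rfl⟩
    constructor <;> by_contra! hw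
    · obtain ⟨u, ⟨hwu, hud⟩, hu⟩ := intermediate_value_Icc hwd
        (hfcd.mono (Icc_subset_Icc_left hcw)) ⟨hw.le, hfst.trans hd.ge⟩
      have huc : u ≤ c := hcmax ⟨⟨hsc.trans (hcw.trans hwu), hud.trans hdt⟩, hu⟩
      exact hw.ne (by rw [← hu, hwu.antisymm (huc.trans hcw)])
    · obtain ⟨u, ⟨hcu, huw⟩, hu⟩ := intermediate_value_Icc hcw
        (hfcd.mono (Icc_subset_Icc_right hwd)) ⟨hc.le.trans hfst, hw.le⟩
      have hdu : d ≤ u := hdmin ⟨⟨hcu, huw.trans (hwd.trans hdt)⟩, hu⟩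
      exact hw.ne' (by rw [← hu, huw.antisymm (hwd.trans hdu)])
  · rw [← hc, ← hd]
    exact intermediate_value_Icc hcd hfcd

theorem exists_nonemptyInterval_image_eq {β : Type*} [LinearOrder β] [TopologicalSpace β]
    [OrderClosedTopology β] {f : α → β} {I : NonemptyInterval α} {J : NonemptyInterval β}
    (hf : ContinuousOn f I) (h : SurjOn f I J) : ∃ K ≤ I, f '' K = J := by
  obtain ⟨⟨p, q⟩, hpq : p ≤ q⟩ := J
  obtain ⟨s, hs, rfl⟩ := h (left_mem_Icc.2 hpq)
  obtain ⟨t, ht, rfl⟩ := h (right_mem_Icc.2 hpq)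
  rcases le_total s t with hst | hts
  · have hsub : Icc s t ⊆ I := Icc_subset_Icc hs.1 ht.2
    obtain ⟨c, d, hcd, hcdst, himg⟩ := exists_Icc_subset_image_eq_Icc hst (hf.mono hsub) hpq
    exact ⟨⟨(c, d), hcd⟩, NonemptyInterval.coe_subset_coe.1 (hcdst.trans hsub), himg⟩
  · have hsub : Icc t s ⊆ I := Icc_subset_Icc ht.1 hs.2
    obtain ⟨c, d, hcd, hcdts, himg⟩ := exists_Icc_subset_image_eq_Icc (β := βᵒᵈ) hts
      (hf.mono hsub) hpq
    exact ⟨⟨(c, d), hcd⟩, NonemptyInterval.coe_subset_coe.1 (hcdts.trans hsub),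
      himg.trans Icc_toDual⟩

variable {f : α → α} {I : ℕ → NonemptyInterval α}

theorem exists_iterate_image_eq_of_surjOn (hf : Continuous f)
    (hI : ∀ i, SurjOn f (I i) (I (i + 1))) (n : ℕ) :
    ∃ K ≤ I 0, f^[n] '' K = I n ∧ ∀ i ≤ n, MapsTo f^[i] K (I i) := by
  induction n with
  | zero =>
    refine ⟨I 0, le_rfl, image_id _, fun i hi ↦ ?_⟩
    rw [Nat.le_zero.1 hi]
    exact mapsTo_id _
  | succ n ih =>
    obtain ⟨K, hK, himg, hmaps⟩ := ih
    have hsurj : SurjOn f^[n + 1] K (I (n + 1)) := by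
      rw [iterate_succ']
      exact (hI n).comp himg.ge
    obtain ⟨K', hK', himg'⟩ :=
      exists_nonemptyInterval_image_eq (hf.iterate (n + 1)).continuousOn hsurj
    refine ⟨K', hK'.trans hK, himg', fun i hi ↦ ?_⟩
    rcases hi.lt_or_eq with hin | rfl
    · exact (hmaps i (Nat.lt_succ_iff.1 hin)).mono_left (NonemptyInterval.coe_subset_coe.2 hK')
    · exact mapsTo_iff_image_subset.2 himg'.le

theorem exists_isPeriodicPt_of_surjOn (hf : Continuous f)
    (hI : ∀ i, SurjOn f (I i) (I (i + 1))) {n : ℕ} (hn : I n = I 0) :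
    ∃ y, IsPeriodicPt f n y ∧ ∀ i ≤ n, f^[i] y ∈ I i := by
  obtain ⟨K, hK, himg, hmaps⟩ := exists_iterate_image_eq_of_surjOn hf hI n
  have hsurj : SurjOn f^[n] K K := by
    refine fun y hy ↦ himg.ge ?_
    rw [hn]
    exact NonemptyInterval.coe_subset_coe.2 hK hy
  obtain ⟨y, hy, hfix⟩ := exists_mem_Icc_isFixedPt_of_surjOn (hf.iterate n).continuousOn
    K.fst_le_snd hsurj
  exact ⟨y, hfix, fun i hi ↦ hmaps i hi hy⟩

theorem exists_isPeriodicPt_of_horseshoe {L R : NonemptyInterval α} (hf : Continuous f)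
    (hL : SurjOn f L (L ∪ R)) (hR : SurjOn f R (L ∪ R)) {n : ℕ} (hn : n ≠ 0) :
    ∃ y ∈ L, IsPeriodicPt f n y ∧ ∀ i, ¬ n ∣ i → f^[i] y ∈ R := by
  let I : ℕ → NonemptyInterval α := fun i ↦ if n ∣ i then L else R
  have hI : ∀ i, SurjOn f (I i) (I (i + 1)) := by
    have hsurj : ∀ i, SurjOn f (I i) (L ∪ R) := fun i ↦ by
      dsimp only [I]
      split_ifs <;> assumption
    refine fun i ↦ (hsurj i).mono subset_rfl ?_
    dsimp only [I]
    split_ifs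
    exacts [subset_union_left, subset_union_right]
  obtain ⟨y, hper, hy⟩ := exists_isPeriodicPt_of_surjOn hf hI (n := n) (by simp [I])
  refine ⟨y, by simpa [I] using hy 0 n.zero_le, hper, fun i hi ↦ ?_⟩
  have hmod : ¬ n ∣ i % n := by rwa [Nat.dvd_mod_iff dvd_rfl]
  rw [← hper.iterate_mod_apply]
  simpa only [I, if_neg hmod] using hy (i % n) (Nat.mod_lt i hn.bot_lt).le

theorem exists_minimalPeriod_eq_of_horseshoe_s5 {d v e : α} (hf : Continuous f) (hdv : d < v)
    (hve : v ≤ e) (hd : e ≤ f d) (hv : f v ≤ d) (he : e ≤ f e) {n : ℕ} (hn : n ≠ 0) :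
    ∃ y ∈ Icc d v, minimalPeriod f y = n ∧ ∀ i, f^[i] y ∈ Icc d e := by
  let L : NonemptyInterval α := ⟨(d, v), hdv.le⟩
  let R : NonemptyInterval α := ⟨(v, e), hve⟩
  have hLR : (L ∪ R : Set α) = Icc d e := Icc_union_Icc_eq_Icc hdv.le hve
  have hL : SurjOn f L (L ∪ R) := by
    rw [hLR]
    exact (Icc_subset_Icc hv hd).trans (intermediate_value_Icc' hdv.le hf.continuousOn)
  have hR : SurjOn f R (L ∪ R) := by
    rw [hLR]
    exact (Icc_subset_Icc hv he).trans (intermediate_value_Icc hve hf.continuousOn)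
  obtain ⟨y, hyL, hper, hyR⟩ := exists_isPeriodicPt_of_horseshoe hf hL hR hn
  refine ⟨y, hyL, hper.minimalPeriod_dvd.antisymm ?_, fun i ↦ ?_⟩
  · by_contra hndvd
    have hyv : y = v := hyL.2.antisymm <| by simpa using (hyR _ hndvd).1
    have hone : ¬ n ∣ 1 := fun h ↦ hndvd (h.trans (one_dvd _))
    exact (hdv.trans_le (hyR 1 hone).1).not_ge (by simpa [hyv] using hv)
  · by_cases hi : n ∣ i
    · have hfix : f^[i] y = y := hper.trans_dvd hi
      rw [hfix]
      exact ⟨hyL.1, hyL.2.trans hve⟩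
    · exact ⟨hdv.le.trans (hyR i hi).1, (hyR i hi).2⟩

end Covering

section Doubling

variable {α : Type*} [ConditionallyCompleteLinearOrder α] [DenselyOrdered α] [TopologicalSpace α]
  [OrderTopology α] {f : α → α} {a d e v x z : α}

theorem exists_minimalPeriod_eq_two_mul_of_horseshoe (hf : Continuous f) (hdv : d < v)
    (hve : v ≤ e) (hvz : v < z) (hd : e ≤ f (f d)) (hv : f (f v) ≤ d) (he : e ≤ f (f e))
    (hz : ∀ t ∈ Icc d e, z ≤ f t) {n : ℕ} (hn : n ≠ 0) : ∃ y, minimalPeriod f y = 2 * n := by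
  obtain ⟨y, hy, hper, hmem⟩ :=
    exists_minimalPeriod_eq_of_horseshoe_s5 (hf.iterate 2) hdv hve hd hv he hn
  refine ⟨y, minimalPeriod_eq_two_mul (fun i ↦ ?_) hper⟩
  rw [iterate_succ_apply', iterate_mul]
  exact ((hy.2.trans_lt hvz).trans_le (hz _ (hmem i))).ne'

theorem lt_apply_of_apply_apply_lt {s : Set α} (hs : s.OrdConnected) (hf : ContinuousOn f s)
    (hz : IsFixedPt f z) (hlt : ∀ t ∈ s, f (f t) < z) (hv : v ∈ s) (hzv : z < f v) :
    ∀ t ∈ s, z < f t := by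
  by_contra! h
  obtain ⟨t, ht, htz⟩ := h
  obtain ⟨u, hu, huz⟩ := hs.isPreconnected.intermediate_value ht hv hf ⟨htz, hzv.le⟩
  exact (hlt u hu).ne (by rw [huz, hz])

theorem exists_isFixedPt_of_forall_le_iterate (hf : Continuous f) (ha : a ∈ periodicPts f)
    (hmin : ∀ j, a ≤ f^[j] a) (hne : f (f a) ≠ a) :
    ∃ v z, a < v ∧ v < z ∧ IsFixedPt f z ∧ z < f v ∧ f (f v) = a := by
  have hfa : f a ≠ a := fun h ↦ hne (by rw [h, h])
  obtain ⟨k, hk⟩ : ∃ k, f (f^[k] a) = a := by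
    refine ⟨minimalPeriod f a - 1, ?_⟩
    rw [← iterate_succ_apply' f, Nat.succ_eq_add_one,
      Nat.sub_add_cancel (minimalPeriod_pos_of_mem_periodicPts ha), iterate_minimalPeriod]
  set b := f^[k] a
  have hab : a < b := (hmin k).lt_of_ne fun h ↦ hfa ((congrArg f h).trans hk)
  obtain ⟨t, ⟨hat, htb⟩, hbt⟩ : ∃ t ∈ Ico a b, b ≤ f t := by
    by_contra! h
    exact (iterate_mem_Ico hmin hab h k).2.false
  obtain ⟨z, ⟨htz, hzb⟩, hz⟩ := exists_mem_Icc_isFixedPt hf.continuousOn htb.le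
    (htb.le.trans hbt) (hk.trans_le hab.le)
  have hzb : z < b := hzb.lt_of_ne fun h ↦ hab.ne (by rw [← hk, ← h, hz])
  obtain ⟨v, ⟨htv, hvz⟩, hv⟩ := intermediate_value_Icc' htz hf.continuousOn
    ⟨hz.trans_le hzb.le, hbt⟩
  have hffv : f (f v) = a := by rw [hv, hk]
  exact ⟨v, z, (hat.trans htv).lt_of_ne fun h ↦ hne (by rwa [← h] at hffv),
    hvz.lt_of_ne fun h ↦ hzb.ne (by rw [← hv, h, hz]), hz, hzb.trans_eq hv.symm, hffv⟩

theorem exists_mem_Ico_le_apply_apply (hf : Continuous f) {m : ℕ} (hm : Odd m)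
    (ha : IsPeriodicPt f m a) (hmin : ∀ j, a ≤ f^[j] a) (hz : IsFixedPt f z) (hez : e ≤ z)
    (hv : v ∈ Ico a e) (hzv : z < f v) : ∃ t ∈ Ico a e, e ≤ f (f t) := by
  by_contra! h
  have hae : a < e := hv.1.trans_lt hv.2
  obtain ⟨k, rfl⟩ := hm
  have hmem : f^[2 * k] a ∈ Ico a e := by
    rw [iterate_mul]
    exact iterate_mem_Ico (f := f^[2]) (fun j ↦ iterate_mul f 2 j ▸ hmin (2 * j)) hae h k
  have hlt : z < f (f^[2 * k] a) := lt_apply_of_apply_apply_lt ordConnected_Ico hf.continuousOn hz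
    (fun t ht ↦ (h t ht).trans_le hez) hv hzv _ hmem
  rw [← iterate_succ_apply' f, Nat.succ_eq_add_one, ha.eq] at hlt
  exact (hae.trans_le hez).not_gt hlt

theorem exists_horseshoe_of_odd_period (hf : Continuous f) {m : ℕ} (hm : Odd m)
    (ha : IsPeriodicPt f m a) (hmin : ∀ j, a ≤ f^[j] a) (hz : IsFixedPt f z) (hav : a < v)
    (hvz : v < z) (hzv : z < f v) (hffv : f (f v) = a) :
    ∃ d e, d < v ∧ v ≤ e ∧ e ≤ f (f d) ∧ f (f v) ≤ d ∧ e ≤ f (f e) ∧ ∀ t ∈ Icc d e, z ≤ f t := by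
  have hff : Continuous fun t ↦ f (f t) := hf.comp hf
  obtain ⟨e, ⟨⟨hve, hez⟩, he : e ≤ f (f e)⟩, hemin⟩ :=
    (isCompact_Icc.inter_right (isClosed_le continuous_id hff)).exists_isLeast
      ⟨z, ⟨hvz.le, le_rfl⟩, by simp [hz.eq]⟩
  have hright : ∀ t ∈ Ico v e, f (f t) < e := fun t ht ↦ by
    by_contra! h
    exact ht.2.not_ge (hemin ⟨⟨ht.1, ht.2.le.trans hez⟩, ht.2.le.trans h⟩)
  have hve : v < e := hve.lt_of_ne fun h ↦ hav.not_ge (by rwa [← h, hffv] at he)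
  obtain ⟨t, ht, het⟩ :=
    exists_mem_Ico_le_apply_apply hf hm ha hmin hz hez ⟨hav.le, hve⟩ hzv
  have htv : t ≤ v := not_lt.1 fun h ↦ (hright t ⟨h.le, ht.2⟩).not_ge het
  obtain ⟨d, ⟨⟨had, hdv⟩, hd : e ≤ f (f d)⟩, hdmax⟩ :=
    (isCompact_Icc.inter_right (isClosed_le continuous_const hff)).exists_isGreatest
      ⟨t, ⟨ht.1, htv⟩, het⟩
  have hdv : d < v := hdv.lt_of_ne fun h ↦ (hav.trans hve).not_ge (by rwa [h, hffv] at hd)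
  have hlt : ∀ t ∈ Ioo d e, f (f t) < e := fun t ht ↦ by
    rcases le_total t v with htv | hvt
    · by_contra! h
      exact ht.1.not_ge (hdmax ⟨⟨had.trans ht.1.le, htv⟩, h⟩)
    · exact hright t ⟨hvt, ht.2⟩
  have habove : ∀ t ∈ Ioo d e, z < f t := lt_apply_of_apply_apply_lt ordConnected_Ioo
    hf.continuousOn hz (fun t ht ↦ (hlt t ht).trans_le hez) ⟨hdv, hve⟩ hzv
  refine ⟨d, e, hdv, hve.le, hd, hffv.trans_le had, he, ?_⟩
  rw [← closure_Ioo (hdv.trans hve).ne]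
  exact closure_minimal (fun t ht ↦ (habove t ht).le) (isClosed_le continuous_const hf)

theorem exists_minimalPeriod_eq_two_mul_of_odd (hf : Continuous f)
    (hodd : Odd (minimalPeriod f x)) (hx : ¬ IsFixedPt f x) {n : ℕ} (hn : n ≠ 0) :
    ∃ y, minimalPeriod f y = 2 * n := by
  have hxper : x ∈ periodicPts f := minimalPeriod_pos_iff_mem_periodicPts.1 hodd.pos
  obtain ⟨k, hmin⟩ := exists_forall_iterate_le hxper
  have hk : minimalPeriod f (f^[k] x) = minimalPeriod f x := minimalPeriod_apply_iterate hxper k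
  set a := f^[k] x
  have ha : a ∈ periodicPts f := minimalPeriod_pos_iff_mem_periodicPts.1 (hk ▸ hodd.pos)
  have hne : f (f a) ≠ a := fun h ↦ by
    have htwo : IsPeriodicPt f 2 a := h
    have hdvd := htwo.minimalPeriod_dvd
    rw [hk, Nat.dvd_prime Nat.prime_two] at hdvd
    rcases hdvd with hone | htwo
    · exact hx (minimalPeriod_eq_one_iff_isFixedPt.1 hone)
    · exact absurd (htwo ▸ hodd) (by decide)
  obtain ⟨v, z, hav, hvz, hz, hzv, hffv⟩ := exists_isFixedPt_of_forall_le_iterate hf ha hmin hne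
  obtain ⟨d, e, hdv, hve, hd, hv, he, habove⟩ := exists_horseshoe_of_odd_period hf hodd
    (hk ▸ isPeriodicPt_minimalPeriod f a) hmin hz hav hvz hzv hffv
  exact exists_minimalPeriod_eq_two_mul_of_horseshoe hf hdv hve hvz hd hv he habove hn

theorem odd_period_implies_period_six_and_double_general {s : Set α} [s.OrdConnected]
    (hf : ContinuousOn f s) (hmaps : MapsTo f s s) (hx : x ∈ s) (hodd : Odd (minimalPeriod f x))
    (hfix : ¬ IsFixedPt f x) {n : ℕ} (hn : n ≠ 0) : ∃ y ∈ s, minimalPeriod f y = 2 * n := by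
  have : Inhabited s := ⟨⟨x, hx⟩⟩
  rw [← minimalPeriod_eq_one_iff_isFixedPt] at hfix
  rw [← minimalPeriod_mapsTo_restrict hmaps ⟨x, hx⟩] at hodd hfix
  obtain ⟨y, hy⟩ := exists_minimalPeriod_eq_two_mul_of_odd (hf.mapsToRestrict hmaps) hodd
    (mt minimalPeriod_eq_one_iff_isFixedPt.2 hfix) hn
  exact ⟨y, y.2, by rw [← minimalPeriod_mapsTo_restrict hmaps, hy]⟩

end Doubling

theorem odd_period_implies_period_six_and_double (a b : ℝ) (hab : a ≤ b) (f : ℝ → ℝ)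
    (hcont : ContinuousOn f (Set.Icc a b))
    (hmaps : Set.MapsTo f (Set.Icc a b) (Set.Icc a b))
    (m : ℕ) (hm : 3 ≤ m) (hodd : Odd m)
    (x : ℝ) (hx : x ∈ Set.Icc a b) (hper : PeriodPt f m x) :
    (∃ y ∈ Set.Icc a b, PeriodPt f 6 y) ∧ (∃ z ∈ Set.Icc a b, PeriodPt f (2 * m) z) := by
  have hdouble : ∀ n, n ≠ 0 → ∃ y ∈ Icc a b, PeriodPt f (2 * n) y := fun n hn ↦ by
    obtain rfl := (minimalPeriod_eq_iff (by omega)).2 hper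
    obtain ⟨y, hy, hyn⟩ := odd_period_implies_period_six_and_double_general hcont hmaps hx hodd
      (mt minimalPeriod_eq_one_iff_isFixedPt.2 (by omega)) hn
    exact ⟨y, hy, (minimalPeriod_eq_iff (by omega)).1 hyn⟩
  exact ⟨hdouble 3 three_ne_zero, hdouble m (by omega)⟩
end

section
/- Let J and L be closed subintervals of I with f(J) ⊇ L. Then there exists a closed subinterval K of J such that f(K) = L. -/
/-!
Let `f` take the value `e` at `u` and the value `g` at `v`, say with `u ≤ v`. Let `q` be the first
point of `[u, v]` where `f = g`, and then `p` the last point of `[u, q]` where `f = e`. If some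
`f x` with `x ∈ [p, q]` were not between `e` and `g`, then either `g` would lie between `e` and
`f x` or `e` between `f x` and `g`, so by the intermediate value theorem `f` would take the value
`g` before `q` or the value `e` after `p`.
-/

open Set

theorem isCompact_inter_preimage_of_isClosed {X Y : Type*} [TopologicalSpace X] [T2Space X]
    [TopologicalSpace Y] {f : X → Y} {s : Set X} {t : Set Y} (hs : IsCompact s)
    (hf : ContinuousOn f s) (ht : IsClosed t) : IsCompact (s ∩ f ⁻¹' t) :=
  hs.of_isClosed_subset (hf.preimage_isClosed_of_isClosed hs.isClosed ht) inter_subset_left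

theorem mem_uIcc_or_mem_uIcc_of_notMem_uIcc {β : Type*} [LinearOrder β] {x y z : β}
    (h : y ∉ uIcc x z) : z ∈ uIcc x y ∨ x ∈ uIcc y z := by
  grind [mem_uIcc]

section ExactImage

variable {α β : Type*}
  [ConditionallyCompleteLinearOrder α] [TopologicalSpace α] [OrderTopology α] [DenselyOrdered α]
  [LinearOrder β] [TopologicalSpace β] [OrderClosedTopology β] {f : α → β}

theorem uIcc_subset_image_Icc {u v : α} (huv : u ≤ v) (hf : ContinuousOn f (Icc u v)) :
    uIcc (f u) (f v) ⊆ f '' Icc u v := by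
  rw [← uIcc_of_le huv] at hf ⊢
  exact intermediate_value_uIcc hf

theorem image_Icc_eq_uIcc_of_endpoint_values_unique {p q : α} (hpq : p ≤ q)
    (hf : ContinuousOn f (Icc p q)) (hp : ∀ x ∈ Icc p q, f x = f p → x = p)
    (hq : ∀ x ∈ Icc p q, f x = f q → x = q) : f '' Icc p q = uIcc (f p) (f q) := by
  refine Subset.antisymm ?_ (uIcc_subset_image_Icc hpq hf)
  rintro _ ⟨x, ⟨hpx, hxq⟩, rfl⟩
  by_contra hx
  rcases mem_uIcc_or_mem_uIcc_of_notMem_uIcc hx with h | h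
  · obtain ⟨y, ⟨hpy, hyx⟩, hy⟩ : f q ∈ f '' Icc p x :=
      uIcc_subset_image_Icc hpx (hf.mono (Icc_subset_Icc_right hxq)) h
    have hyq : y = q := hq y ⟨hpy, hyx.trans hxq⟩ hy
    have hxq' : x = q := le_antisymm hxq (hyq ▸ hyx)
    exact hx (hxq' ▸ right_mem_uIcc)
  · obtain ⟨y, ⟨hxy, hyq⟩, hy⟩ : f p ∈ f '' Icc x q :=
      uIcc_subset_image_Icc hxq (hf.mono (Icc_subset_Icc_left hpx)) h
    have hyp : y = p := hp y ⟨hpx.trans hxy, hyq⟩ hy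
    have hxp : x = p := le_antisymm (hyp ▸ hxy) hpx
    exact hx (hxp ▸ left_mem_uIcc)

theorem exists_image_Icc_eq_uIcc_of_le {u v : α} (huv : u ≤ v) (hf : ContinuousOn f (Icc u v)) :
    ∃ p ∈ Icc u v, ∃ q ∈ Icc u v, p ≤ q ∧ f '' Icc p q = uIcc (f u) (f v) := by
  obtain ⟨q, ⟨⟨huq, hqv⟩, hfq : f q = f v⟩, hq_first⟩ :=
    (isCompact_inter_preimage_of_isClosed isCompact_Icc hf isClosed_singleton).exists_isLeast
      ⟨v, right_mem_Icc.2 huv, rfl⟩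
  have hf_uq : ContinuousOn f (Icc u q) := hf.mono (Icc_subset_Icc_right hqv)
  obtain ⟨p, ⟨⟨hup, hpq⟩, hfp : f p = f u⟩, hp_last⟩ :=
    (isCompact_inter_preimage_of_isClosed isCompact_Icc hf_uq isClosed_singleton).exists_isGreatest
      ⟨u, left_mem_Icc.2 huq, rfl⟩
  refine ⟨p, ⟨hup, hpq.trans hqv⟩, q, ⟨huq, hqv⟩, hpq, ?_⟩
  rw [← hfp, ← hfq]
  refine image_Icc_eq_uIcc_of_endpoint_values_unique hpq (hf_uq.mono (Icc_subset_Icc_left hup))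
    (fun x ⟨hpx, hxq⟩ hx ↦ ?_) (fun x ⟨hpx, hxq⟩ hx ↦ ?_)
  · exact le_antisymm (hp_last ⟨⟨hup.trans hpx, hxq⟩, hx.trans hfp⟩) hpx
  · exact le_antisymm hxq (hq_first ⟨⟨hup.trans hpx, hxq.trans hqv⟩, hx.trans hfq⟩)

theorem exists_subinterval_with_exact_image_general {s : Set α} (hs : s.OrdConnected)
    (hf : ContinuousOn f s) {e g : β} (he : e ∈ f '' s) (hg : g ∈ f '' s) :
    ∃ p ∈ s, ∃ q ∈ s, p ≤ q ∧ f '' Icc p q = uIcc e g := by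
  obtain ⟨u, hu, rfl⟩ := he
  obtain ⟨v, hv, rfl⟩ := hg
  wlog huv : u ≤ v generalizing u v
  · rw [uIcc_comm]
    exact this v hv u hu (le_of_not_ge huv)
  have huv_sub : Icc u v ⊆ s := hs.out hu hv
  obtain ⟨p, hp, q, hq, hpq, himage⟩ := exists_image_Icc_eq_uIcc_of_le huv (hf.mono huv_sub)
  exact ⟨p, huv_sub hp, q, huv_sub hq, hpq, himage⟩

end ExactImage

theorem exists_subinterval_with_exact_image (a b : ℝ) (hab : a ≤ b) (f : ℝ → ℝ)
    (hcont : ContinuousOn f (Set.Icc a b))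
    (hmaps : Set.MapsTo f (Set.Icc a b) (Set.Icc a b))
    (c d e g : ℝ) (hac : a ≤ c) (hcd : c ≤ d) (hdb : d ≤ b)
    (hae : a ≤ e) (heg : e ≤ g) (hgb : g ≤ b)
    (hcover : Set.Icc e g ⊆ f '' Set.Icc c d) :
    ∃ p q : ℝ, c ≤ p ∧ p ≤ q ∧ q ≤ d ∧ f '' Set.Icc p q = Set.Icc e g := by
  obtain ⟨p, ⟨hcp, -⟩, q, ⟨-, hqd⟩, hpq, himage⟩ := exists_subinterval_with_exact_image_general
    ordConnected_Icc (hcont.mono (Icc_subset_Icc hac hdb))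
    (hcover (left_mem_Icc.2 heg)) (hcover (right_mem_Icc.2 heg))
  exact ⟨p, q, hcp, hpq, hqd, himage.trans (uIcc_of_le heg)⟩
end

section
/- Let J_0, J_1, …, J_{n-1}, J_n be closed subintervals of I with J_n = J_0 such that f(J_i) ⊇ J_{i+1} for i = 0, 1, …, n−1. Then there exists a point y ∈ J_0 such that f^i(y) ∈ J_i for i = 0, 1, …, n−1 and f^n(y) = y. -/
/-!
If `g` maps a compact interval over `[u, v]`, then it maps some subinterval exactly onto `[u, v]`.
Pulling `J_n` back along the chain with this fact gives a closed interval `K ⊆ J_0` whose points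
visit `J_0, …, J_n` in turn and which `f^n` maps onto `J_n = J_0 ⊇ K`. A continuous map of a compact
interval over itself has a fixed point, so `f^n` has one in `K`.
-/

section

open Set

variable {α : Type*} [ConditionallyCompleteLinearOrder α] [TopologicalSpace α] [OrderTopology α]
  [DenselyOrdered α]

section Image

variable {δ : Type*} [LinearOrder δ] [TopologicalSpace δ] [OrderClosedTopology δ]
  {g : α → δ} {x y : α} {u v : δ}

theorem exists_Icc_subset_image_eq_of_le_of_le (hg : ContinuousOn g (Icc x y)) (hxy : x ≤ y)
    (huv : u ≤ v) (hu : g x ≤ u) (hv : v ≤ g y) :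
    ∃ p q, p ≤ q ∧ Icc p q ⊆ Icc x y ∧ g '' Icc p q = Icc u v := by
  obtain ⟨p, ⟨⟨hxp, hpy⟩, hgp⟩, hp_max⟩ : ∃ p, IsGreatest (Icc x y ∩ g ⁻¹' Iic u) p :=
    (isCompact_Icc.of_isClosed_subset (hg.preimage_isClosed_of_isClosed isClosed_Icc isClosed_Iic)
      inter_subset_left).exists_isGreatest ⟨x, left_mem_Icc.2 hxy, hu⟩
  have hg_right : ContinuousOn g (Icc p y) := hg.mono (Icc_subset_Icc_left hxp)
  obtain ⟨q, ⟨⟨hpq, hqy⟩, hgq⟩, hq_min⟩ : ∃ q, IsLeast (Icc p y ∩ g ⁻¹' Ici v) q :=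
    (isCompact_Icc.of_isClosed_subset
      (hg_right.preimage_isClosed_of_isClosed isClosed_Icc isClosed_Ici)
      inter_subset_left).exists_isLeast ⟨y, right_mem_Icc.2 hpy, hv⟩
  have hsurj : Icc u v ⊆ g '' Icc p q :=
    (Icc_subset_Icc hgp hgq).trans
      (intermediate_value_Icc hpq (hg_right.mono (Icc_subset_Icc_right hqy)))
  have hgp_eq : g p = u := by
    obtain ⟨s, ⟨hps, hsq⟩, hgs⟩ := hsurj (left_mem_Icc.2 huv)
    have hsp : s ≤ p := hp_max ⟨⟨hxp.trans hps, hsq.trans hqy⟩, hgs.le⟩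
    rwa [hsp.antisymm hps] at hgs
  have hgq_eq : g q = v := by
    obtain ⟨s, ⟨hps, hsq⟩, hgs⟩ := hsurj (right_mem_Icc.2 huv)
    have hqs : q ≤ s := hq_min ⟨⟨hps, hsq.trans hqy⟩, hgs.ge⟩
    rwa [hsq.antisymm hqs] at hgs
  refine ⟨p, q, hpq, Icc_subset_Icc hxp hqy, Subset.antisymm ?_ hsurj⟩
  rintro _ ⟨t, ⟨hpt, htq⟩, rfl⟩
  constructor
  · rcases hpt.eq_or_lt with rfl | hpt
    · exact hgp_eq.ge
    · exact le_of_not_ge fun hgt => hpt.not_ge (hp_max ⟨⟨hxp.trans hpt.le, htq.trans hqy⟩, hgt⟩)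
  · rcases htq.eq_or_lt with rfl | htq
    · exact hgq_eq.le
    · exact le_of_not_ge fun hgt => htq.not_ge (hq_min ⟨⟨hpt, htq.le.trans hqy⟩, hgt⟩)

theorem exists_Icc_subset_image_eq_of_surjOn (hg : ContinuousOn g (Icc x y)) (huv : u ≤ v)
    (hsurj : SurjOn g (Icc x y) (Icc u v)) :
    ∃ p q, p ≤ q ∧ Icc p q ⊆ Icc x y ∧ g '' Icc p q = Icc u v := by
  obtain ⟨s, hs, rfl⟩ := hsurj (left_mem_Icc.2 huv)
  obtain ⟨t, ht, rfl⟩ := hsurj (right_mem_Icc.2 huv)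
  rcases le_total s t with hst | hts
  · have hsub : Icc s t ⊆ Icc x y := Icc_subset_Icc hs.1 ht.2
    obtain ⟨p, q, hpq, hpq_sub, himage⟩ :=
      exists_Icc_subset_image_eq_of_le_of_le (hg.mono hsub) hst huv le_rfl le_rfl
    exact ⟨p, q, hpq, hpq_sub.trans hsub, himage⟩
  · have hsub : Icc t s ⊆ Icc x y := Icc_subset_Icc ht.1 hs.2
    obtain ⟨p, q, hpq, hpq_sub, himage⟩ :=
      exists_Icc_subset_image_eq_of_le_of_le (g := OrderDual.toDual ∘ g)
        (u := OrderDual.toDual (g t)) (v := OrderDual.toDual (g s))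
        (hg.mono hsub) hts huv le_rfl le_rfl
    exact ⟨p, q, hpq, hpq_sub.trans hsub, himage.trans Icc_toDual⟩

end Image

variable {f : α → α} {n : ℕ} {c d : ℕ → α}

theorem exists_Icc_mapsTo_iterate_image_eq
    (hcont : ∀ i < n, ContinuousOn f (Icc (c i) (d i))) (hle : c n ≤ d n)
    (hsurj : ∀ i < n, SurjOn f (Icc (c i) (d i)) (Icc (c (i + 1)) (d (i + 1)))) :
    ∃ p q, p ≤ q ∧ (∀ i ≤ n, MapsTo f^[i] (Icc p q) (Icc (c i) (d i))) ∧
      ContinuousOn f^[n] (Icc p q) ∧ f^[n] '' Icc p q = Icc (c n) (d n) := by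
  induction n generalizing c d with
  | zero =>
    refine ⟨c 0, d 0, hle, fun i hi => ?_, continuousOn_id, image_id _⟩
    obtain rfl := Nat.le_zero.1 hi
    exact mapsTo_id _
  | succ n ih =>
    obtain ⟨p₁, q₁, hpq₁, hmaps₁, hcont₁, himage₁⟩ :=
      ih (c := fun i => c (i + 1)) (d := fun i => d (i + 1))
        (fun i hi => hcont (i + 1) (Nat.succ_lt_succ hi)) hle
        (fun i hi => hsurj (i + 1) (Nat.succ_lt_succ hi))
    have hcont₀ : ContinuousOn f (Icc (c 0) (d 0)) := hcont 0 n.succ_pos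
    obtain ⟨p, q, hpq, hsub, himage⟩ := exists_Icc_subset_image_eq_of_surjOn hcont₀ hpq₁
      ((hsurj 0 n.succ_pos).mono Subset.rfl (hmaps₁ 0 n.zero_le))
    have hmaps : MapsTo f (Icc p q) (Icc p₁ q₁) := mapsTo_iff_image_subset.2 himage.subset
    refine ⟨p, q, hpq, fun i hi => ?_, hcont₁.comp (hcont₀.mono hsub) hmaps, ?_⟩
    · cases i with
      | zero => exact hsub
      | succ i => exact (hmaps₁ i (Nat.le_of_succ_le_succ hi)).comp hmaps
    · rw [Function.iterate_succ, image_comp, himage, himage₁]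

theorem cycle_of_intervals_gives_periodic_point_general
    (hcont : ∀ i < n, ContinuousOn f (Icc (c i) (d i))) (hle : c 0 ≤ d 0)
    (hc : c n = c 0) (hd : d n = d 0)
    (hsurj : ∀ i < n, SurjOn f (Icc (c i) (d i)) (Icc (c (i + 1)) (d (i + 1)))) :
    ∃ y ∈ Icc (c 0) (d 0), (∀ i < n, f^[i] y ∈ Icc (c i) (d i)) ∧ f^[n] y = y := by
  obtain ⟨p, q, hpq, hmaps, hcont_iter, himage⟩ :=
    exists_Icc_mapsTo_iterate_image_eq hcont (by rwa [hc, hd]) hsurj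
  have hsub : Icc p q ⊆ Icc (c 0) (d 0) := hmaps 0 n.zero_le
  have hsurj_iter : SurjOn f^[n] (Icc p q) (Icc p q) := by
    rwa [SurjOn, himage, hc, hd]
  obtain ⟨y, hy, hfix⟩ := exists_mem_Icc_isFixedPt_of_surjOn hcont_iter hpq hsurj_iter
  exact ⟨y, hsub hy, fun i hi => hmaps i hi.le hy, hfix⟩

end

theorem cycle_of_intervals_gives_periodic_point (a b : ℝ) (hab : a ≤ b) (f : ℝ → ℝ)
    (hcont : ContinuousOn f (Set.Icc a b))
    (hmaps : Set.MapsTo f (Set.Icc a b) (Set.Icc a b))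
    (n : ℕ) (hn : 0 < n) (c d : ℕ → ℝ)
    (hsub : ∀ i ≤ n, a ≤ c i ∧ c i ≤ d i ∧ d i ≤ b)
    (hc : c n = c 0) (hd : d n = d 0)
    (hcyc : ∀ i < n, Set.Icc (c (i + 1)) (d (i + 1)) ⊆ f '' Set.Icc (c i) (d i)) :
    ∃ y ∈ Set.Icc (c 0) (d 0),
      (∀ i < n, f^[i] y ∈ Set.Icc (c i) (d i)) ∧ f^[n] y = y :=
  cycle_of_intervals_gives_periodic_point_general
    (fun i hi => hcont.mono (Set.Icc_subset_Icc (hsub i hi.le).1 (hsub i hi.le).2.2))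
    (hsub 0 n.zero_le).2.1 hc hd hcyc
end

section
/- Suppose there exist a point c ∈ I, a fixed point z of f, and an integer k ≥ 2 such that f(c) < c < z < f^k(c). Then there exist a point d ∈ I and a fixed point ẑ of f such that f(d) < d < ẑ < f^2(d); moreover f is strictly turbulent and f has periodic points of all (least) periods n ≥ 1. -/
/-- `f` is strictly turbulent on `[a, b]`: there are two disjoint closed subintervals such that
`f(I₀) ∩ f(I₁) ⊇ I₀ ∪ I₁`. -/
def StrictlyTurbulent (f : ℝ → ℝ) (a b : ℝ) : Prop :=
  ∃ p q r s : ℝ, a ≤ p ∧ p ≤ q ∧ q ≤ b ∧ a ≤ r ∧ r ≤ s ∧ s ≤ b ∧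
    Disjoint (Set.Icc p q) (Set.Icc r s) ∧
    Set.Icc p q ∪ Set.Icc r s ⊆ f '' Set.Icc p q ∩ f '' Set.Icc r s

/-!
Let `w` be the first fixed point to the right of `c`; then `f x < x` on `[c, w)`. Let `y` be the
last point of the orbit of `c` before it jumps over `w`. As `w < f y`, `y` lies to the left of `c`,
so some earlier orbit point `e ∈ (y, w)` satisfies `f e ≤ y`, and the intermediate value theorem
on `[e, w]` gives `d` with `f d = y`. On `[y, d]` the map descends from above `w` to `y`, so there
are `y < p ≤ q < d` with `f p = w` and `f q = p`, and both `[p, q]` and `[d, w]` are mapped over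
`[p, w]`. Periodic points of any period are then found by following an itinerary which visits
`[p, q]` once and stays in `[d, w]` for the remaining time.
-/

open Function Set

section IntermediateValue

variable {α β : Type*} [ConditionallyCompleteLinearOrder α] [TopologicalSpace α] [OrderTopology α]
  [DenselyOrdered α] [LinearOrder β] [TopologicalSpace β] [OrderClosedTopology β]

theorem exists_eq_forall_Ico_lt {f g : α → β} {u v : α} (huv : u ≤ v)
    (hf : ContinuousOn f (Icc u v)) (hg : ContinuousOn g (Icc u v)) (hu : f u ≤ g u)
    (hv : g v ≤ f v) :
    ∃ t ∈ Icc u v, f t = g t ∧ ∀ x ∈ Ico u t, f x < g x := by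
  have hcompact : IsCompact {x ∈ Icc u v | g x ≤ f x} :=
    isCompact_Icc.of_isClosed_subset (isClosed_Icc.isClosed_le hg hf) (sep_subset _ _)
  obtain ⟨t, ⟨ht, hgf⟩, hleast⟩ := hcompact.exists_isLeast ⟨v, right_mem_Icc.2 huv, hv⟩
  have hsub : Icc u t ⊆ Icc u v := Icc_subset_Icc_right ht.2
  obtain ⟨e, he, hfge⟩ := isPreconnected_Icc.intermediate_value₂ (left_mem_Icc.2 ht.1)
    (right_mem_Icc.2 ht.1) (hf.mono hsub) (hg.mono hsub) hu hgf
  obtain rfl : e = t := le_antisymm he.2 (hleast ⟨hsub he, hfge.ge⟩)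
  exact ⟨e, ht, hfge, fun x hx => lt_of_not_ge fun h =>
    (hleast ⟨hsub ⟨hx.1, hx.2.le⟩, h⟩).not_gt hx.2⟩

theorem exists_eq_forall_Ioc_gt {f g : α → β} {u v : α} (huv : u ≤ v)
    (hf : ContinuousOn f (Icc u v)) (hg : ContinuousOn g (Icc u v)) (hu : f u ≤ g u)
    (hv : g v ≤ f v) :
    ∃ t ∈ Icc u v, f t = g t ∧ ∀ x ∈ Ioc t v, g x < f x := by
  obtain ⟨t, ht, heq, hlt⟩ := exists_eq_forall_Ico_lt (α := αᵒᵈ) (f := g ∘ OrderDual.ofDual)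
    (g := f ∘ OrderDual.ofDual) (u := OrderDual.toDual v) (v := OrderDual.toDual u) huv
    (by rw [Icc_toDual]; exact hg) (by rw [Icc_toDual]; exact hf) hv hu
  exact ⟨OrderDual.ofDual t, ht.symm, heq.symm, fun x hx => hlt x hx.symm⟩

theorem exists_Icc_image_eq_Icc {g : α → β} {x y : α} {r s : β} (hxy : x ≤ y)
    (hg : ContinuousOn g (Icc x y)) (hrs : r ≤ s) (hx : g x ≤ r) (hy : s ≤ g y) :
    ∃ u v, x ≤ u ∧ u ≤ v ∧ v ≤ y ∧ g '' Icc u v = Icc r s := by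
  obtain ⟨u, hu, hgu, habove⟩ :=
    exists_eq_forall_Ioc_gt hxy hg continuousOn_const hx (hrs.trans hy)
  have hg' : ContinuousOn g (Icc u y) := hg.mono (Icc_subset_Icc_left hu.1)
  obtain ⟨v, hv, hgv, hbelow⟩ :=
    exists_eq_forall_Ico_lt hu.2 hg' continuousOn_const (hgu.trans_le hrs) hy
  refine ⟨u, v, hu.1, hv.1, hv.2, Subset.antisymm ?_ ?_⟩
  · rintro _ ⟨t, ht, rfl⟩
    constructor
    · rcases ht.1.eq_or_lt with rfl | hut
      · exact hgu.ge
      · exact (habove t ⟨hut, ht.2.trans hv.2⟩).le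
    · rcases ht.2.eq_or_lt with rfl | htv
      · exact hgv.le
      · exact (hbelow t ⟨ht.1, htv⟩).le
  · simpa only [hgu, hgv] using
      intermediate_value_Icc hv.1 (hg'.mono (Icc_subset_Icc_right hv.2))

theorem exists_subinterval_image_eq_of_surjOn {g : α → β} {I : NonemptyInterval α}
    {J : NonemptyInterval β} (hg : ContinuousOn g I) (h : SurjOn g I J) :
    ∃ K ≤ I, g '' K = J := by
  obtain ⟨x, hx, hgx⟩ := h (left_mem_Icc.2 J.fst_le_snd)
  obtain ⟨y, hy, hgy⟩ := h (right_mem_Icc.2 J.fst_le_snd)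
  rcases le_total x y with hxy | hyx
  · obtain ⟨u, v, hxu, huv, hvy, himage⟩ := exists_Icc_image_eq_Icc hxy
      (hg.mono (Icc_subset_Icc hx.1 hy.2)) J.fst_le_snd hgx.le hgy.ge
    exact ⟨⟨(u, v), huv⟩, ⟨hx.1.trans hxu, hvy.trans hy.2⟩, himage⟩
  · obtain ⟨u, v, hyu, huv, hvx, himage⟩ := exists_Icc_image_eq_Icc
      (g := OrderDual.toDual ∘ g) (r := OrderDual.toDual J.snd) (s := OrderDual.toDual J.fst) hyx
      (hg.mono (Icc_subset_Icc hy.1 hx.2)) J.fst_le_snd hgy.ge hgx.le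
    exact ⟨⟨(u, v), huv⟩, ⟨hy.1.trans hyu, hvx.trans hx.2⟩, himage.trans Icc_toDual⟩

end IntermediateValue

section Itinerary

theorem continuousOn_iterate_of_mapsTo {X : Type*} [TopologicalSpace X] {f : X → X} {s : Set X}
    {t : ℕ → Set X} {n : ℕ} (hf : ∀ i < n, ContinuousOn f (t i))
    (hs : ∀ i < n, MapsTo f^[i] s (t i)) : ContinuousOn f^[n] s := by
  induction n with
  | zero => exact continuousOn_id
  | succ n ih =>
    rw [iterate_succ']
    exact (hf n n.lt_succ_self).comp
      (ih (fun i hi => hf i (hi.trans n.lt_succ_self)) fun i hi => hs i (hi.trans n.lt_succ_self))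
      (hs n n.lt_succ_self)

variable {α : Type*} [ConditionallyCompleteLinearOrder α] [TopologicalSpace α] [OrderTopology α]
  [DenselyOrdered α] {f : α → α} {J : ℕ → NonemptyInterval α}

theorem exists_subinterval_following (hf : ∀ i, ContinuousOn f (J i))
    (hcover : ∀ i, SurjOn f (J i) (J (i + 1))) (n : ℕ) :
    ∃ K : NonemptyInterval α, (∀ i ≤ n, MapsTo f^[i] K (J i)) ∧ f^[n] '' K = J n := by
  induction n with
  | zero => exact ⟨J 0, by simp [mapsTo_id], image_id _⟩
  | succ n ih =>
    obtain ⟨K, hmaps, himage⟩ := ih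
    have hcont : ContinuousOn f^[n + 1] K :=
      continuousOn_iterate_of_mapsTo (fun i _ => hf i) fun i hi => hmaps i (Nat.le_of_lt_succ hi)
    have hsurj : SurjOn f^[n + 1] K (J (n + 1)) := by
      rw [iterate_succ', SurjOn, image_comp, himage]
      exact hcover n
    obtain ⟨L, hLK, hL⟩ := exists_subinterval_image_eq_of_surjOn hcont hsurj
    refine ⟨L, fun i hi => ?_, hL⟩
    rcases Nat.le_succ_iff.1 hi with hi | rfl
    · exact (hmaps i hi).mono_left (NonemptyInterval.coe_subset_coe.2 hLK)
    · exact mapsTo_iff_image_subset.2 hL.subset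

theorem exists_isPeriodicPt_following (hf : ∀ i, ContinuousOn f (J i))
    (hcover : ∀ i, SurjOn f (J i) (J (i + 1))) {n : ℕ} (hn : J n = J 0) :
    ∃ x, IsPeriodicPt f n x ∧ ∀ i ≤ n, f^[i] x ∈ J i := by
  obtain ⟨K, hmaps, himage⟩ := exists_subinterval_following hf hcover n
  have hcont : ContinuousOn f^[n] K :=
    continuousOn_iterate_of_mapsTo (fun i _ => hf i) fun i hi => hmaps i hi.le
  have hsurj : SurjOn f^[n] K K := by
    rw [SurjOn, himage, hn]
    exact hmaps 0 n.zero_le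
  obtain ⟨x, hx, hfix⟩ := exists_mem_Icc_isFixedPt_of_surjOn hcont K.fst_le_snd hsurj
  exact ⟨x, hfix, fun i hi => hmaps i hi hx⟩

end Itinerary

/-- Strict turbulence of `f` inside an arbitrary subset `s` of a linear order, that is,
the two disjoint closed intervals are contained in `s`. Taking `I` and `J` in `NonemptyInterval`
rules out empty intervals. -/
def StrictlyTurbulentOn {α : Type*} [PartialOrder α] (f : α → α) (s : Set α) : Prop :=
  ∃ I J : NonemptyInterval α, (I : Set α) ⊆ s ∧ (J : Set α) ⊆ s ∧ Disjoint (I : Set α) J ∧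
    SurjOn f I (I ∪ J) ∧ SurjOn f J (I ∪ J)

namespace StrictlyTurbulentOn

theorem mono {α : Type*} [PartialOrder α] {f : α → α} {s t : Set α}
    (h : StrictlyTurbulentOn f s) (hst : s ⊆ t) : StrictlyTurbulentOn f t := by
  obtain ⟨I, J, hI, hJ, h⟩ := h
  exact ⟨I, J, hI.trans hst, hJ.trans hst, h⟩

theorem strictlyTurbulent {f : ℝ → ℝ} {a b : ℝ} (h : StrictlyTurbulentOn f (Icc a b)) :
    StrictlyTurbulent f a b := by
  obtain ⟨I, J, hI, hJ, hdisj, hfI, hfJ⟩ := h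
  obtain ⟨hap, hqb⟩ := (Icc_subset_Icc_iff I.fst_le_snd).1 hI
  obtain ⟨har, hsb⟩ := (Icc_subset_Icc_iff J.fst_le_snd).1 hJ
  exact ⟨I.fst, I.snd, J.fst, J.snd, hap, I.fst_le_snd, hqb, har, J.fst_le_snd, hsb, hdisj,
    subset_inter hfI hfJ⟩

theorem exists_minimalPeriod_eq {α : Type*} [ConditionallyCompleteLinearOrder α]
    [TopologicalSpace α] [OrderTopology α] [DenselyOrdered α] {f : α → α} {s : Set α}
    (h : StrictlyTurbulentOn f s) (hf : ContinuousOn f s) {n : ℕ} (hn : 0 < n) :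
    ∃ x ∈ s, minimalPeriod f x = n := by
  obtain ⟨I, J, hI, hJ, hdisj, hfI, hfJ⟩ := h
  let L : ℕ → NonemptyInterval α := fun i => if i = 0 ∨ i = n then I else J
  have hL : ∀ i, L i = I ∨ L i = J := fun i => ite_eq_or_eq _ _ _
  have hcont : ∀ i, ContinuousOn f (L i) := fun i => by
    rcases hL i with h | h <;> rw [h]
    exacts [hf.mono hI, hf.mono hJ]
  have hsub : ∀ i, (L i : Set α) ⊆ I ∪ J := fun i => by
    rcases hL i with h | h <;> rw [h]
    exacts [subset_union_left, subset_union_right]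
  have hcover : ∀ i, SurjOn f (L i) (L (i + 1)) := fun i => by
    rcases hL i with h | h <;> rw [h]
    exacts [hfI.mono Subset.rfl (hsub _), hfJ.mono Subset.rfl (hsub _)]
  obtain ⟨x, hper, hmem⟩ := exists_isPeriodicPt_following hcont hcover (n := n) (by simp [L])
  have hxI : x ∈ (I : Set α) := by simpa [L] using hmem 0 n.zero_le
  refine ⟨x, hI hxI, (hper.minimalPeriod_le hn).antisymm (le_of_not_gt fun hlt => ?_)⟩
  have hpos : 0 < minimalPeriod f x := hper.minimalPeriod_pos hn
  have hxJ : x ∈ (J : Set α) := by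
    simpa [L, hpos.ne', hlt.ne, iterate_minimalPeriod] using hmem _ hlt.le
  exact disjoint_left.1 hdisj hxI hxJ

end StrictlyTurbulentOn

theorem periodPt_of_minimalPeriod_eq {f : ℝ → ℝ} {n : ℕ} {x : ℝ} (h : minimalPeriod f x = n) :
    PeriodPt f n x := by
  subst h
  exact ⟨iterate_minimalPeriod, fun i hi hlt =>
    not_isPeriodicPt_of_pos_of_lt_minimalPeriod hi.ne' hlt⟩

section Orbit

variable {α : Type*} [LinearOrder α]

theorem exists_lt_and_succ_le {u : ℕ → α} {y : α} {n : ℕ} (h0 : y < u 0) (hn : u n ≤ y) :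
    ∃ m < n, y < u m ∧ u (m + 1) ≤ y := by
  by_contra! hstay
  have habove : ∀ m ≤ n, y < u m := fun m => by
    induction m with
    | zero => exact fun _ => h0
    | succ m ih => exact fun hm => hstay m hm (ih (Nat.le_of_succ_le hm))
  exact (habove n le_rfl).not_ge hn

theorem exists_forall_le_iterate_lt_and_lt_iterate_succ {f : α → α} {c w : α} {k : ℕ}
    (hfw : IsFixedPt f w) (hcw : c < w) (hk : w < f^[k] c) :
    ∃ n, (∀ i ≤ n, f^[i] c < w) ∧ w < f^[n + 1] c := by
  have hreach : ∃ m, w ≤ f^[m] c := ⟨k, hk.le⟩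
  obtain ⟨n, hn : Nat.find hreach = n + 1⟩ := Nat.exists_eq_succ_of_ne_zero
    (mt (Nat.find_eq_zero hreach).1 hcw.not_ge)
  have hnk : n + 1 ≤ k := hn ▸ Nat.find_min' hreach hk.le
  have hfirst : w ≤ f^[n + 1] c := hn ▸ Nat.find_spec hreach
  refine ⟨n, fun i hi => not_le.1 (Nat.find_min hreach (hn ▸ Nat.lt_succ_of_le hi)),
    hfirst.lt_of_ne fun hstuck => hk.ne ?_⟩
  rw [← Nat.sub_add_cancel hnk, iterate_add_apply, ← hstuck]
  exact (hfw.iterate _).symm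

end Orbit

section Turbulence

variable {α : Type*} [ConditionallyCompleteLinearOrder α] [TopologicalSpace α] [OrderTopology α]
  [DenselyOrdered α] {f : α → α}

theorem exists_isFixedPt_forall_Ico_lt {c z : α} (hf : ContinuousOn f (Icc c z)) (hcz : c ≤ z)
    (hfc : f c < c) (hfz : z ≤ f z) :
    ∃ w ∈ Ioc c z, IsFixedPt f w ∧ ∀ x ∈ Ico c w, f x < x := by
  obtain ⟨w, hw, hfw, hlt⟩ := exists_eq_forall_Ico_lt hcz hf continuousOn_id hfc.le hfz
  exact ⟨w, ⟨hw.1.lt_of_ne (by rintro rfl; exact hfc.ne hfw), hw.2⟩, hfw, hlt⟩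

theorem exists_lt_fixedPt_lt_iterate_two {s : Set α} (hs : s.OrdConnected)
    (hf : ContinuousOn f s) (hmaps : MapsTo f s s) {c z : α} {k : ℕ} (hc : c ∈ s)
    (hfc : f c < c) (hcz : c < z) (hfz : z ≤ f z) (hk : z < f^[k] c) :
    ∃ d ∈ s, ∃ w ∈ s, f w = w ∧ f d < d ∧ d < w ∧ w < f^[2] d := by
  have horbit : ∀ i, f^[i] c ∈ s := fun i => hmaps.iterate i hc
  have hz : z ∈ s := hs.out hc (horbit k) ⟨hcz.le, hk.le⟩
  obtain ⟨w, ⟨hcw, hwz⟩, hfw, hlt⟩ :=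
    exists_isFixedPt_forall_Ico_lt (hf.mono (hs.out hc hz)) hcz.le hfc hfz
  have hw : w ∈ s := hs.out hc hz ⟨hcw.le, hwz⟩
  obtain ⟨n, hbelow, habove⟩ :=
    exists_forall_le_iterate_lt_and_lt_iterate_succ hfw hcw (hwz.trans_lt hk)
  have hyw : f^[n] c < w := hbelow n le_rfl
  rw [iterate_succ_apply'] at habove
  have hyc : f^[n] c < c := lt_of_not_ge fun h => (hlt _ ⟨h, hyw⟩).not_gt (hyw.trans habove)
  obtain ⟨m, hmn, hye, hfe⟩ := exists_lt_and_succ_le (u := fun i => f^[i] c) hyc le_rfl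
  have hew : f^[m] c < w := hbelow m hmn.le
  rw [iterate_succ_apply'] at hfe
  obtain ⟨d, hd, hfd⟩ := intermediate_value_Icc hew.le (hf.mono (hs.out (horbit m) hw))
    ⟨hfe, hyw.le.trans_eq hfw.symm⟩
  have hdw : d < w := hd.2.lt_of_ne (by rintro rfl; exact hyw.ne (hfd.symm.trans hfw))
  refine ⟨d, hs.out (horbit m) hw hd, w, hw, hfw, hfd.trans_lt (hye.trans_le hd.1), hdw, ?_⟩
  rwa [← hfd] at habove

theorem strictlyTurbulentOn_of_lt_fixedPt_lt_iterate_two {d w : α}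
    (hf : ContinuousOn f (Icc (f d) w)) (hfw : f w = w) (hfd : f d < d) (hdw : d < w)
    (hw : w < f^[2] d) : StrictlyTurbulentOn f (Icc (f d) w) := by
  obtain ⟨p, hp, hfp⟩ := intermediate_value_Icc' hfd.le (hf.mono (Icc_subset_Icc_right hdw.le))
    ⟨(hfd.trans hdw).le, hw.le⟩
  have hpd : f d < p := hp.1.lt_of_ne (by rintro rfl; exact hw.ne' hfp)
  have hpw : p ≤ w := hp.2.trans hdw.le
  obtain ⟨q, hq, hfq⟩ := intermediate_value_Icc' hp.2 (hf.mono (Icc_subset_Icc hp.1 hdw.le))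
    ⟨hp.1, hpw.trans_eq hfp.symm⟩
  have hqd : q < d := hq.2.lt_of_ne (by rintro rfl; exact hpd.ne hfq)
  have hunion : Icc p q ∪ Icc d w ⊆ Icc p w :=
    union_subset (Icc_subset_Icc_right (hqd.trans hdw).le) (Icc_subset_Icc_left hp.2)
  have hleft : SurjOn f (Icc p q) (Icc p w) := by
    simpa only [SurjOn, hfp, hfq] using
      intermediate_value_Icc' hq.1 (hf.mono (Icc_subset_Icc hp.1 (hqd.trans hdw).le))
  have hright : SurjOn f (Icc d w) (Icc (f d) w) := by
    simpa only [SurjOn, hfw] using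
      intermediate_value_Icc hdw.le (hf.mono (Icc_subset_Icc_left hfd.le))
  exact ⟨⟨(p, q), hq.1⟩, ⟨(d, w), hdw.le⟩, Icc_subset_Icc hp.1 (hqd.trans hdw).le,
    Icc_subset_Icc_left hfd.le, disjoint_left.2 fun x hx hx' => (hx.2.trans_lt hqd).not_ge hx'.1,
    hleft.mono Subset.rfl hunion,
    hright.mono Subset.rfl (hunion.trans (Icc_subset_Icc_left hp.1))⟩

theorem strict_turbulence_from_orbit_data_general {s : Set α} (hs : s.OrdConnected)
    (hf : ContinuousOn f s) (hmaps : MapsTo f s s) {c z : α} {k : ℕ} (hc : c ∈ s)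
    (hfc : f c < c) (hcz : c < z) (hfz : z ≤ f z) (hk : z < f^[k] c) :
    (∃ d ∈ s, ∃ w ∈ s, f w = w ∧ f d < d ∧ d < w ∧ w < f^[2] d) ∧
      StrictlyTurbulentOn f s ∧ ∀ n : ℕ, 1 ≤ n → ∃ x ∈ s, minimalPeriod f x = n := by
  obtain ⟨d, hds, w, hws, hfw, hfd, hdw, hw⟩ :=
    exists_lt_fixedPt_lt_iterate_two hs hf hmaps hc hfc hcz hfz hk
  have hsub : Icc (f d) w ⊆ s := hs.out (hmaps hds) hws
  have hturb : StrictlyTurbulentOn f s :=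
    (strictlyTurbulentOn_of_lt_fixedPt_lt_iterate_two (hf.mono hsub) hfw hfd hdw hw).mono hsub
  exact ⟨⟨d, hds, w, hws, hfw, hfd, hdw, hw⟩, hturb,
    fun _ hn => hturb.exists_minimalPeriod_eq hf hn⟩

end Turbulence

theorem strict_turbulence_from_orbit_data (a b : ℝ) (hab : a ≤ b) (f : ℝ → ℝ)
    (hcont : ContinuousOn f (Set.Icc a b))
    (hmaps : Set.MapsTo f (Set.Icc a b) (Set.Icc a b))
    (c z : ℝ) (hc : c ∈ Set.Icc a b) (hz : z ∈ Set.Icc a b) (hfz : f z = z)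
    (k : ℕ) (hk : 2 ≤ k)
    (h1 : f c < c) (h2 : c < z) (h3 : z < f^[k] c) :
    (∃ d ∈ Set.Icc a b, ∃ w ∈ Set.Icc a b, f w = w ∧ f d < d ∧ d < w ∧ w < f^[2] d) ∧
      StrictlyTurbulent f a b ∧ ∀ n : ℕ, 1 ≤ n → ∃ x ∈ Set.Icc a b, PeriodPt f n x := by
  obtain ⟨hd, hturb, hper⟩ :=
    strict_turbulence_from_orbit_data_general ordConnected_Icc hcont hmaps hc h1 h2 hfz.ge h3
  exact ⟨hd, hturb.strictlyTurbulent, fun n hn =>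
    (hper n hn).imp fun _ hx => ⟨hx.1, periodPt_of_minimalPeriod_eq hx.2⟩⟩
end
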